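/- arXiv:2412.15160 — 12 statements merged into one kernel-verified Lean document; each statement's English description precedes it below -/
import Mathlib

section
/- Let α ∈ F_q^n have pairwise distinct entries, let v, w ∈ F_q^n have all entries nonzero, and let k, ℓ ≥ 1. Then GRS_k(α, v) ⋆ GRS_ℓ(α, w) = GRS_{k+ℓ−1}(α, v ⋆ w). -/
open Polynomial

/-- The evaluation map `f ↦ (v_1 f(α_1), …, v_n f(α_n))`. -/
noncomputable def ev {F : Type*} [Field F] {ι : Type*} (α v : ι → F) :
    Polynomial F →ₗ[F] (ι → F) where
  toFun f := fun i => v i * f.eval (α i)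
  map_add' f g := by ext i; simp [mul_add]
  map_smul' a f := by ext i; simp [smul_eq_mul]; ring

/-- The generalized Reed–Solomon code `GRS_k(α, v) = ev_{α,v}(F[x]_{<k})`. -/
noncomputable def GRS {F : Type*} [Field F] {ι : Type*} (k : ℕ) (α v : ι → F) :
    Submodule F (ι → F) :=
  (Polynomial.degreeLT F k).map (ev α v)

/-- The Schur (componentwise) product of two subspaces of `F^n`. -/
def schurProduct (F : Type*) [Field F] {ι : Type*} (A B : Submodule F (ι → F)) :
    Submodule F (ι → F) :=
  Submodule.span F {x | ∃ a ∈ A, ∃ b ∈ B, x = a * b}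

/-- `GRS_k(α, v) ⋆ GRS_ℓ(α, w) = GRS_{k+ℓ−1}(α, v ⋆ w)` for `α` with pairwise distinct
entries, `v, w` with all entries nonzero, and `k, ℓ ≥ 1`. -/
theorem stmt1 {F : Type*} [Field F] [Fintype F] {n : ℕ} (α v w : Fin n → F)
    (hα : Function.Injective α) (hv : ∀ i, v i ≠ 0) (hw : ∀ i, w i ≠ 0)
    {k l : ℕ} (hk : 1 ≤ k) (hl : 1 ≤ l) :
    schurProduct F (GRS k α v) (GRS l α w) = GRS (k + l - 1) α (v * w) := by
  apply le_antisymm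
  · refine Submodule.span_le.2 ?_
    rintro x ⟨a, ⟨f, hf, rfl⟩, b, ⟨g, hg, rfl⟩, rfl⟩
    refine ⟨f * g, ?_, ?_⟩
    · have hf' := Polynomial.mem_degreeLT.1 hf
      have hg' := Polynomial.mem_degreeLT.1 hg
      refine Polynomial.mem_degreeLT.2 ?_
      by_cases hf0 : f = 0
      · simp [hf0, WithBot.bot_lt_coe]
      by_cases hg0 : g = 0
      · simp [hg0, WithBot.bot_lt_coe]
      have h1 := (Polynomial.natDegree_lt_iff_degree_lt hf0).2 hf'
      have h2 := (Polynomial.natDegree_lt_iff_degree_lt hg0).2 hg'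
      refine (Polynomial.natDegree_lt_iff_degree_lt (mul_ne_zero hf0 hg0)).1 ?_
      rw [Polynomial.natDegree_mul hf0 hg0]
      omega
    · ext i
      simp only [ev, LinearMap.coe_mk, AddHom.coe_mk, Pi.mul_apply, Polynomial.eval_mul]
      ring
  · rintro x ⟨f, hf, rfl⟩
    have hd := Polynomial.mem_degreeLT.1 hf
    rw [Polynomial.as_sum_range' f (k + l - 1) (by
      by_cases hf0 : f = 0
      · subst hf0
        simp only [Polynomial.natDegree_zero]
        omega
      · exact (Polynomial.natDegree_lt_iff_degree_lt hf0).2 hd), map_sum]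
    refine Submodule.sum_mem _ fun m hm => ?_
    have hm' := Finset.mem_range.1 hm
    rw [← Polynomial.C_mul_X_pow_eq_monomial, ← Polynomial.smul_eq_C_mul, map_smul]
    refine Submodule.smul_mem _ _ (Submodule.subset_span ?_)
    refine ⟨ev α v (X ^ min m (k - 1)), ⟨_, ?_, rfl⟩,
      ev α w (X ^ (m - min m (k - 1))), ⟨_, ?_, rfl⟩, ?_⟩
    · refine Polynomial.mem_degreeLT.2 ?_
      rw [Polynomial.degree_X_pow]
      exact_mod_cast (by omega : min m (k - 1) < k)
    · refine Polynomial.mem_degreeLT.2 ?_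
      rw [Polynomial.degree_X_pow]
      exact_mod_cast (by omega : m - min m (k - 1) < l)
    · ext i
      have h : α i ^ m = α i ^ min m (k - 1) * α i ^ (m - min m (k - 1)) := by
        rw [← pow_add]
        congr 1
        omega
      simp only [ev, LinearMap.coe_mk, AddHom.coe_mk, Pi.mul_apply, Polynomial.eval_pow,
        Polynomial.eval_X]
      rw [h]
      ring
end

section
/- Let ℓ ≤ k ≤ n ≤ q, let α ∈ F_q^n have pairwise distinct entries and v ∈ F_q^n have all nonzero entries. Let h = (h_1,…,h_ℓ) be pairwise distinct elements of {0,…,k−1}, t = (t_1,…,t_ℓ) pairwise distinct elements of {1,…,n−k}, and η = (η_1,…,η_ℓ) ∈ (F_q \ {0})^ℓ. Then the TGRS code C = ev_{α,v}(P_{t,h,η}^{n,k}) is an ℓ-qGRS code with respect to α, v and dimension parameter k: namely C = C_0 ⊕ C_1, where C_0 = ev_{α,v}(span{x^i : 0 ≤ i ≤ k−1, i ∉ {h_1,…,h_ℓ}}) is a subspace of codimension ℓ of GRS_k(α, v), and C_1 = ev_{α,v}(span{x^{h_j} + η_j x^{k−1+t_j} : 1 ≤ j ≤ ℓ}) has dimension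 ℓ and satisfies C_1 ∩ GRS_k(α, v) = 0. -/
open Polynomial

/-- The linear map `(f_0,…,f_{k−1}) ↦ Σ_{i<k} f_i x^i + Σ_j η_j f_{h_j} x^{k−1+t_j}`,
whose range is the twisted polynomial space `P_{t,h,η}^{n,k}`. -/
noncomputable def twistedMap {F : Type*} [Field F] (k : ℕ) {ℓ : ℕ}
    (t : Fin ℓ → ℕ) (h : Fin ℓ → Fin k) (η : Fin ℓ → F) :
    (Fin k → F) →ₗ[F] Polynomial F :=
  (∑ i : Fin k, (Polynomial.monomial (i : ℕ)).comp (LinearMap.proj i)) +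
  ∑ j : Fin ℓ, (Polynomial.monomial (k - 1 + t j)).comp (η j • LinearMap.proj (h j))

lemma ev_injOn {F : Type*} [Field F] {n : ℕ} (α v : Fin n → F) (hα : Function.Injective α)
    (hv : ∀ i, v i ≠ 0) : Set.InjOn (ev α v) (Polynomial.degreeLT F n : Set (Polynomial F)) := by
  intro p hp q hq hpq
  have hs : p - q ∈ Polynomial.degreeLT F n := Submodule.sub_mem _ hp hq
  rw [Polynomial.mem_degreeLT] at hs
  rw [← sub_eq_zero]
  refine Polynomial.eq_zero_of_degree_lt_of_eval_index_eq_zero (s := Finset.univ) (v := α)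
    hα.injOn (by simpa using hs) ?_
  intro i _
  have := congrFun hpq i
  simp only [ev, LinearMap.coe_mk, AddHom.coe_mk] at this
  simp [mul_left_cancel₀ (hv i) this]

lemma twisted_range {F : Type*} [Field F] {k ℓ : ℕ}
    (h : Fin ℓ → Fin k) (hh : Function.Injective h) (t : Fin ℓ → ℕ) (η : Fin ℓ → F) :
    LinearMap.range (twistedMap k t h η) =
      (Submodule.span F ((fun i : Fin k => (Polynomial.X : Polynomial F) ^ (i : ℕ)) ''
        {i | i ∉ Set.range h})) ⊔ (Submodule.span F (Set.range fun j : Fin ℓ =>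
        (Polynomial.X : Polynomial F) ^ ((h j : ℕ)) +
          Polynomial.C (η j) * Polynomial.X ^ (k - 1 + t j))) := by
  have e0 : ∀ i, i ∉ Set.range h → twistedMap k t h η (Pi.single i 1) = X ^ (i : ℕ) := by
    intro i hi
    have : ∀ j, h j ≠ i := fun j hj => hi ⟨j, hj⟩
    simp [twistedMap, LinearMap.sum_apply, Pi.single_apply, this, apply_ite, Finset.sum_ite_eq',
      X_pow_eq_monomial]
  have e1 : ∀ j, twistedMap k t h η (Pi.single (h j) 1) =
      X ^ (h j : ℕ) + Polynomial.C (η j) * X ^ (k - 1 + t j) := by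
    intro j
    simp [twistedMap, LinearMap.sum_apply, Pi.single_apply, hh.eq_iff, apply_ite,
      Finset.sum_ite_eq', X_pow_eq_monomial, C_mul_monomial]
  rw [LinearMap.range_eq_map, ← (Pi.basisFun F (Fin k)).span_eq, Submodule.map_span,
    ← Submodule.span_union]
  congr 1
  ext p
  simp only [Set.mem_image, Set.mem_range, Set.mem_union, Set.mem_ofPred_eq]
  constructor
  · rintro ⟨_, ⟨i, rfl⟩, rfl⟩
    rw [Pi.basisFun_apply]
    by_cases hi : i ∈ Set.range h
    · obtain ⟨j, rfl⟩ := hi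
      exact Or.inr ⟨j, (e1 j).symm⟩
    · exact Or.inl ⟨i, hi, (e0 i hi).symm⟩
  · rintro (⟨i, hi, rfl⟩ | ⟨j, rfl⟩)
    · exact ⟨_, ⟨i, rfl⟩, by rw [Pi.basisFun_apply]; exact e0 i hi⟩
    · exact ⟨_, ⟨h j, rfl⟩, by rw [Pi.basisFun_apply]; exact e1 j⟩

lemma finrank_map_ev {F : Type*} [Field F] {n : ℕ} (α v : Fin n → F) (hα : Function.Injective α)
    (hv : ∀ i, v i ≠ 0) {ι : Type*} [Fintype ι] (b : ι → Polynomial F)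
    (hb : LinearIndependent F b) (hn : Submodule.span F (Set.range b) ≤ Polynomial.degreeLT F n) :
    Module.finrank F ((Submodule.span F (Set.range b)).map (ev α v)) = Fintype.card ι := by
  rw [Submodule.map_span, ← Set.range_comp]
  exact finrank_span_eq_card (hb.map_injOn _ ((ev_injOn α v hα hv).mono hn))

/-- A TGRS code with `ℓ` twists is an `ℓ`-qGRS code: it decomposes as `C₀ ⊕ C₁` where
`C₀ = ev(span{x^i : i < k, i ∉ h})` has codimension `ℓ` in `GRS_k(α,v)` and
`C₁ = ev(span{x^{h_j} + η_j x^{k−1+t_j}})` has dimension `ℓ` and meets `GRS_k(α,v)`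
trivially. -/
theorem stmt5 {F : Type*} [Field F] [Fintype F] {n k ℓ : ℕ}
    (hℓk : ℓ ≤ k) (hkn : k ≤ n) (hnq : n ≤ Fintype.card F)
    (α v : Fin n → F) (hα : Function.Injective α) (hv : ∀ i, v i ≠ 0)
    (h : Fin ℓ → Fin k) (hh : Function.Injective h)
    (t : Fin ℓ → ℕ) (ht : Function.Injective t)
    (ht1 : ∀ j, 1 ≤ t j) (ht2 : ∀ j, t j ≤ n - k)
    (η : Fin ℓ → F) (hη : ∀ j, η j ≠ 0) :
    let C : Submodule F (Fin n → F) := (LinearMap.range (twistedMap k t h η)).map (ev α v)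
    let C0 : Submodule F (Fin n → F) :=
      (Submodule.span F ((fun i : Fin k => (Polynomial.X : Polynomial F) ^ (i : ℕ)) ''
        {i | i ∉ Set.range h})).map (ev α v)
    let C1 : Submodule F (Fin n → F) :=
      (Submodule.span F (Set.range fun j : Fin ℓ =>
        (Polynomial.X : Polynomial F) ^ ((h j : ℕ)) +
          Polynomial.C (η j) * Polynomial.X ^ (k - 1 + t j))).map (ev α v)
    C = C0 ⊔ C1 ∧ C0 ⊓ C1 = ⊥ ∧
      C0 ≤ GRS k α v ∧
      Module.finrank F C0 + ℓ = Module.finrank F (GRS k α v) ∧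
      Module.finrank F C1 = ℓ ∧
      C1 ⊓ GRS k α v = ⊥ := by
  classical
  intro C C0 C1
  have hlow : ∀ i : Fin k, (X : Polynomial F) ^ (i : ℕ) ∈ Polynomial.degreeLT F k := by
    intro i
    rw [Polynomial.mem_degreeLT, degree_X_pow]
    exact_mod_cast i.2
  have hkn' : Polynomial.degreeLT F k ≤ Polynomial.degreeLT F n := Polynomial.degreeLT_mono hkn
  have hge : ∀ j, k ≤ k - 1 + t j := fun j => by have := ht1 j; omega
  have hlt : ∀ j, k - 1 + t j < n := fun j => by
    have := ht2 j; have := (h j).2; omega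
  set b1 : Fin ℓ → Polynomial F := fun j => (Polynomial.X : Polynomial F) ^ ((h j : ℕ)) +
          Polynomial.C (η j) * Polynomial.X ^ (k - 1 + t j) with hb1
  have hP0 : Submodule.span F ((fun i : Fin k => (Polynomial.X : Polynomial F) ^ (i : ℕ)) ''
        {i | i ∉ Set.range h}) ≤ Polynomial.degreeLT F k := by
    rw [Submodule.span_le]
    rintro _ ⟨i, _, rfl⟩
    exact hlow i
  have hP1 : Submodule.span F (Set.range b1) ≤ Polynomial.degreeLT F n := by
    rw [Submodule.span_le]
    rintro _ ⟨j, rfl⟩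
    refine Submodule.add_mem _ (hkn' (hlow (h j))) ?_
    rw [Polynomial.mem_degreeLT]
    refine (degree_C_mul_X_pow_le _ _).trans_lt ?_
    exact_mod_cast hlt j
  have key : ∀ c : Fin ℓ → F, ∑ j, c j • b1 j ∈ Polynomial.degreeLT F k → ∀ j, c j = 0 := by
    intro c hc j
    rw [Polynomial.mem_degreeLT] at hc
    have h0 : (∑ j, c j • b1 j).coeff (k - 1 + t j) = 0 :=
      coeff_eq_zero_of_degree_lt (hc.trans_le (by exact_mod_cast hge j))
    have hne : ∀ i, k - 1 + t j ≠ (h i : ℕ) := fun i => by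
      have := hge j; have := (h i).2; omega
    have := hη j
    simpa [hb1, finsetSum_coeff, coeff_X_pow, hne, ht.eq_iff, hη j] using h0
  have li1 : LinearIndependent F b1 := by
    rw [Fintype.linearIndependent_iff]
    intro c hc
    exact key c (hc ▸ Submodule.zero_mem _)
  have liX : LinearIndependent F (fun i : Fin k => (X : Polynomial F) ^ (i : ℕ)) := by
    have := (Polynomial.basisMonomials F).linearIndependent.comp (fun i : Fin k => (i : ℕ))
      Fin.val_injective
    convert this using 2 with i
    simp [X_pow_eq_monomial]
  have hG : Polynomial.degreeLT F k =
      Submodule.span F (Set.range fun i : Fin k => (X : Polynomial F) ^ (i : ℕ)) := by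
    rw [Polynomial.degreeLT_eq_span_X_pow]
    congr 1
    ext p
    simp only [Finset.coe_image, Set.mem_image, Set.mem_range, Finset.coe_range, Set.mem_Iio]
    exact ⟨fun ⟨i, hi, e⟩ => ⟨⟨i, hi⟩, e⟩, fun ⟨i, e⟩ => ⟨i, i.2, e⟩⟩
  have hC0 : C0 ≤ GRS k α v := Submodule.map_mono hP0
  have hinf : C1 ⊓ GRS k α v = ⊥ := by
    rw [eq_bot_iff]
    rintro _ ⟨⟨p, hp, rfl⟩, ⟨g, hg, hpg⟩⟩
    have e : g = p := ev_injOn α v hα hv (hkn' hg) (hP1 hp) hpg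
    subst e
    obtain ⟨c, rfl⟩ := (Submodule.mem_span_range_iff_exists_fun F).1 hp
    have := key c hg
    simp [this]
  refine ⟨?_, ?_, hC0, ?_, ?_, hinf⟩
  · simp only [C, C0, C1]
    rw [twisted_range h hh, Submodule.map_sup]
  · rw [eq_bot_iff, ← hinf]
    exact fun x hx => ⟨hx.2, hC0 hx.1⟩
  · have h1 : Module.finrank F (GRS k α v) = k := by
      have := finrank_map_ev α v hα hv _ liX (hG ▸ hkn')
      rw [← hG, Fintype.card_fin] at this
      exact this
    have h2 : Module.finrank F C0 = Fintype.card {i : Fin k // i ∉ Set.range h} := by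
      have e : (fun i : Fin k => (Polynomial.X : Polynomial F) ^ (i : ℕ)) ''
        {i | i ∉ Set.range h} = Set.range (fun i : {i : Fin k // i ∉ Set.range h} =>
          (Polynomial.X : Polynomial F) ^ (i.1 : ℕ)) := by
        ext p; simp
      have := finrank_map_ev α v hα hv _ (liX.comp
        (fun i : {i : Fin k // i ∉ Set.range h} => i.1) Subtype.val_injective) (by
          refine le_trans ?_ (hP0.trans hkn')
          rw [e]; exact le_rfl)
      have e2 : C0 = (Submodule.span F (Set.range (fun i : {i : Fin k // i ∉ Set.range h} =>
          (Polynomial.X : Polynomial F) ^ (i.1 : ℕ)))).map (ev α v) :=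
        congrArg (fun s => (Submodule.span F s).map (ev α v)) e
      rw [e2]
      exact this
    have h3 : Fintype.card {i : Fin k // i ∈ Set.range h} = ℓ := by
      have := Set.card_range_of_injective hh
      rw [Fintype.card_fin] at this
      exact (Fintype.card_congr (Equiv.refl _)).trans this
    have h4 := Fintype.card_subtype_compl (fun i : Fin k => i ∈ Set.range h)
    rw [h3, Fintype.card_fin] at h4
    rw [h1, h2, h4]
    omega
  · have := finrank_map_ev α v hα hv _ li1 hP1
    rw [Fintype.card_fin] at this
    exact this
end

section
/- Let C ⊆ F_q^n be an ℓ-qGRS code with respect to α, v and dimension parameter k, and suppose ℓ ≤ n − k. Then the dual code C^⊥ (with respect to the standard bilinear form ⟨x, y⟩ = Σ_i x_i y_i) decomposes as C^⊥ = C_0′ ⊕ C_1′, where C_0′ = GRS_k(α, v)^⊥ ∩ C_1^⊥ is a subspace of codimension ℓ of GRS_k(α, v)^⊥, and C_1′ is a subspace of dimension ℓ with C_1′ ∩ GRS_k(α, v)^⊥ = 0. (Since GRS_k(α, v)^⊥ is itself a GRS code of dimension n − k with the same evaluation points α, this makes C^⊥ an ℓ-qGRS code.) -/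
open Polynomial

/-- The dual code of `C ⊆ F^n` with respect to the standard bilinear form
`⟨x, y⟩ = Σ_i x_i y_i`. -/
def dualCode {F : Type*} [Field F] {n : ℕ} (C : Submodule F (Fin n → F)) :
    Submodule F (Fin n → F) where
  carrier := {x | ∀ c ∈ C, ∑ i, x i * c i = 0}
  add_mem' := by
    intro a b ha hb c hc
    simp only [Set.mem_setOf_eq] at ha hb ⊢
    simp [Pi.add_apply, add_mul, Finset.sum_add_distrib, ha c hc, hb c hc]
  zero_mem' := by intro c hc; simp
  smul_mem' := by
    intro r x hx c hc
    simp only [Set.mem_setOf_eq] at hx ⊢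
    simp [Pi.smul_apply, smul_eq_mul, mul_assoc, ← Finset.mul_sum, hx c hc]

theorem dual_finrank_aux {F : Type*} [Field F] {n : ℕ} (D : Submodule F (Fin n → F)) :
    Module.finrank F D + Module.finrank F (dualCode D) = n := by
  have h := Subspace.finrank_add_finrank_dualAnnihilator_eq D
  have e : (dualCode D).map (dotProductEquiv F (Fin n)).toLinearMap = D.dualAnnihilator := by
    ext φ
    obtain ⟨x, rfl⟩ := (dotProductEquiv F (Fin n)).surjective φ
    rw [Submodule.mem_dualAnnihilator]
    constructor
    · rintro ⟨y, hy, hxy⟩ c hc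
      have : y = x := (dotProductEquiv F (Fin n)).injective hxy
      subst this
      exact hy c hc
    · intro hx
      exact ⟨x, fun c hc => hx c hc, rfl⟩
  rw [← e, LinearEquiv.finrank_map_eq] at h
  simpa using h

theorem dual_sup_aux {F : Type*} [Field F] {n : ℕ} (A B : Submodule F (Fin n → F)) :
    dualCode (A ⊔ B) = dualCode A ⊓ dualCode B := by
  ext x
  constructor
  · intro h
    exact ⟨fun c hc => h c (Submodule.mem_sup_left hc),
      fun c hc => h c (Submodule.mem_sup_right hc)⟩
  · rintro ⟨h1, h2⟩ c hc
    obtain ⟨a, ha, b, hb, rfl⟩ := Submodule.mem_sup.1 hc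
    have e1 : ∑ i, x i * a i = 0 := h1 a ha
    have e2 : ∑ i, x i * b i = 0 := h2 b hb
    simp [mul_add, Finset.sum_add_distrib, e1, e2]

/-- The dual of an `ℓ`-qGRS code `C = C₀ ⊕ C₁` decomposes as
`C^⊥ = C₀′ ⊕ C₁′` where `C₀′ = GRS_k(α,v)^⊥ ∩ C₁^⊥` has codimension `ℓ` in
`GRS_k(α,v)^⊥` and `C₁′` has dimension `ℓ` and meets `GRS_k(α,v)^⊥` trivially. -/
theorem stmt6 {F : Type*} [Field F] [Fintype F] {n k ℓ : ℕ}
    (hkn : k ≤ n) (hℓ : ℓ ≤ n - k)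
    (α v : Fin n → F) (hα : Function.Injective α) (hv : ∀ i, v i ≠ 0)
    (C C0 C1 : Submodule F (Fin n → F))
    (hC : C = C0 ⊔ C1) (hdisj : C0 ⊓ C1 = ⊥)
    (hC0le : C0 ≤ GRS k α v)
    (hcodim : Module.finrank F C0 + ℓ = Module.finrank F (GRS k α v))
    (hC1 : Module.finrank F C1 = ℓ) (hC1int : C1 ⊓ GRS k α v = ⊥) :
    (dualCode (GRS k α v) ⊓ dualCode C1) ≤ dualCode (GRS k α v) ∧
    Module.finrank F ↥(dualCode (GRS k α v) ⊓ dualCode C1) + ℓ =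
      Module.finrank F (dualCode (GRS k α v)) ∧
    ∃ C1' : Submodule F (Fin n → F),
      dualCode C = (dualCode (GRS k α v) ⊓ dualCode C1) ⊔ C1' ∧
      (dualCode (GRS k α v) ⊓ dualCode C1) ⊓ C1' = ⊥ ∧
      Module.finrank F C1' = ℓ ∧
      C1' ⊓ dualCode (GRS k α v) = ⊥ := by
  generalize GRS k α v = G at *
  have d1 := dual_finrank_aux G
  have d2 := dual_finrank_aux (G ⊔ C1)
  have d3 := dual_finrank_aux C
  have s1 := Submodule.finrank_sup_add_finrank_inf_eq G C1
  have s2 := Submodule.finrank_sup_add_finrank_inf_eq C0 C1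
  rw [inf_comm, hC1int, finrank_bot] at s1
  rw [hdisj, finrank_bot, ← hC] at s2
  have key : dualCode C ⊓ dualCode G = dualCode G ⊓ dualCode C1 := by
    rw [← dual_sup_aux, ← dual_sup_aux, hC]
    congr 1
    rw [sup_right_comm, sup_eq_right.2 hC0le]
  rw [dual_sup_aux] at d2
  have hle : dualCode G ⊓ dualCode C1 ≤ dualCode C := key ▸ inf_le_left
  refine ⟨inf_le_left, by omega, ?_⟩
  obtain ⟨K, hK⟩ := Submodule.exists_isCompl (dualCode G ⊓ dualCode C1)
  have hdis : (dualCode G ⊓ dualCode C1) ⊓ (K ⊓ dualCode C) = ⊥ := by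
    rw [← inf_assoc, hK.inf_eq_bot, bot_inf_eq]
  have hsup : dualCode C = (dualCode G ⊓ dualCode C1) ⊔ (K ⊓ dualCode C) := by
    rw [← sup_inf_assoc_of_le K hle, hK.sup_eq_top, top_inf_eq]
  have s3 := Submodule.finrank_sup_add_finrank_inf_eq (dualCode G ⊓ dualCode C1) (K ⊓ dualCode C)
  rw [← hsup, hdis, finrank_bot] at s3
  refine ⟨K ⊓ dualCode C, hsup, hdis, by omega, ?_⟩
  rw [inf_assoc, key, inf_comm, hK.inf_eq_bot]
end

section
/- Let D = GRS_k(α, v) ⊕ D_1 ⊆ F_q^n, where D_1 is a subspace of dimension ℓ with D_1 ∩ GRS_k(α, v) = 0, and let I ⊆ {1,…,n} with s := |I| < k. Then dim(D_I) = dim(D) − s = k + ℓ − s, and there exist α′, v′ ∈ F_q^{n−s} (α′ with pairwise distinct entries, v′ with all entries nonzero) and a subspace D_1′ ⊆ F_q^{n−s} of dimension ℓ such that D_I = GRS_{k−s}(α′, v′) ⊕ D_1′. -/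
open Polynomial

/-- The shortening of a code `C ⊆ F^ι` at `I`. -/
noncomputable def shorten {F : Type*} [Field F] {ι : Type*}
    (C : Submodule F (ι → F)) (I : Set ι) :
    Submodule F ({i : ι // i ∉ I} → F) :=
  ((C ⊓ LinearMap.ker (LinearMap.funLeft F F (fun i : I => (i : ι)))).map
    (LinearMap.funLeft F F (fun j : {i : ι // i ∉ I} => (j : ι))))

theorem finrank_GRS {F : Type*} [Field F] {ι : Type*} [Fintype ι] (k : ℕ) (α v : ι → F)
    (hα : Function.Injective α) (hv : ∀ i, v i ≠ 0) (hk : k ≤ Fintype.card ι) :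
    Module.finrank F (GRS k α v) = k := by
  classical
  have hinj : Function.Injective ((ev α v).domRestrict (Polynomial.degreeLT F k)) := by
    rw [injective_iff_map_eq_zero]
    rintro ⟨f, hf⟩ h
    rw [Polynomial.mem_degreeLT] at hf
    have h0 : f = 0 := by
      refine Polynomial.eq_zero_of_degree_lt_of_eval_index_eq_zero (s := Finset.univ) (v := α)
        (hα.injOn) (lt_of_lt_of_le hf (by rw [Finset.card_univ]; exact_mod_cast hk)) ?_
      intro i _
      have := congrFun h i
      simpa [ev, hv i] using this
    simpa using h0
  have h1 := LinearMap.finrank_range_of_inj hinj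
  rw [LinearMap.range_domRestrict] at h1
  rw [GRS, h1, (Polynomial.degreeLTEquiv F k).finrank_eq]
  simp

theorem finrank_inf_ker {F V W : Type*} [Field F] [AddCommGroup V] [Module F V]
    [FiniteDimensional F V] [AddCommGroup W] [Module F W] [FiniteDimensional F W]
    (f : V →ₗ[F] W) (D : Submodule F V) (h : Submodule.map f D = ⊤) :
    Module.finrank F W + Module.finrank F ↥(D ⊓ LinearMap.ker f) = Module.finrank F D := by
  have h1 := LinearMap.finrank_range_add_finrank_ker (f.domRestrict D)
  rw [LinearMap.range_domRestrict, h, finrank_top] at h1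
  rw [← h1, ← Submodule.map_comap_subtype, Submodule.finrank_map_subtype_eq]
  rfl

theorem map_GRS {F : Type*} [Field F] {ι : Type*} {k : ℕ} (α v : ι → F)
    (hα : Function.Injective α) (hv : ∀ i, v i ≠ 0) (I : Finset ι) (hs : I.card < k) :
    (GRS k α v).map (LinearMap.funLeft F F (fun i : (I : Set ι) => (i : ι))) = ⊤ := by
  classical
  rw [eq_top_iff]
  intro g _
  let r : ι → F := fun i => if h : i ∈ I then g ⟨i, h⟩ / v i else 0
  refine ⟨ev α v (Lagrange.interpolate I α r), ⟨_, ?_, rfl⟩, ?_⟩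
  · rw [SetLike.mem_coe, Polynomial.mem_degreeLT]
    exact (Lagrange.degree_interpolate_lt r hα.injOn).trans (by exact_mod_cast hs)
  · ext ⟨i, hi⟩
    have hi' : i ∈ I := hi
    have := Lagrange.eval_interpolate_at_node r hα.injOn hi'
    simp only [LinearMap.funLeft_apply, ev, LinearMap.coe_mk, AddHom.coe_mk, this]
    simp only [r, hi', dif_pos]
    exact mul_div_cancel₀ _ (hv i)

theorem finrank_shorten {F : Type*} [Field F] {ι : Type*} [Fintype ι]
    (C : Submodule F (ι → F)) (I : Set ι) :
    Module.finrank F (shorten C I) = Module.finrank F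
      ↥(C ⊓ LinearMap.ker (LinearMap.funLeft F F (fun i : I => (i : ι)))) := by
  classical
  have hinj : Function.Injective ((LinearMap.funLeft F F
      (fun j : {i : ι // i ∉ I} => (j : ι))).domRestrict
      (C ⊓ LinearMap.ker (LinearMap.funLeft F F (fun i : I => (i : ι))))) := by
    rw [injective_iff_map_eq_zero]
    rintro ⟨x, hx, hx2⟩ h
    ext i
    by_cases hi : i ∈ I
    · exact congrFun hx2 ⟨i, hi⟩
    · exact congrFun h ⟨i, hi⟩
  have h1 := LinearMap.finrank_range_of_inj hinj
  rw [LinearMap.range_domRestrict] at h1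
  exact h1

theorem GRS_le_shorten {F : Type*} [Field F] {ι : Type*} {k : ℕ} (α v : ι → F)
    (I : Finset ι) (hs : I.card < k) :
    GRS (k - I.card) (fun j : {i : ι // i ∉ (I : Set ι)} => α j)
      (fun j => v j * ∏ i ∈ I, (α j - α i)) ≤ shorten (GRS k α v) (I : Set ι) := by
  rintro _ ⟨f, hf, rfl⟩
  have hf' := Polynomial.mem_degreeLT.1 hf
  refine ⟨ev α v (f * ∏ i ∈ I, (X - C (α i))), ⟨⟨_, ?_, rfl⟩, ?_⟩, ?_⟩
  · rw [SetLike.mem_coe, Polynomial.mem_degreeLT]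
    by_cases h0 : f = 0
    · simp [h0]
    rw [Polynomial.degree_mul, Polynomial.degree_prod]
    rw [Polynomial.degree_eq_natDegree h0] at hf' ⊢
    have h2 : f.natDegree < k - I.card := by exact_mod_cast hf'
    simp only [Polynomial.degree_X_sub_C, Finset.sum_const, nsmul_eq_mul, mul_one]
    have h3 : f.natDegree + I.card < k := by omega
    exact_mod_cast h3
  · rw [SetLike.mem_coe, LinearMap.mem_ker]
    ext ⟨i, hi⟩
    have : ∏ j ∈ I, (α i - α j) = 0 := Finset.prod_eq_zero (i := i) hi (sub_self _)
    simp [LinearMap.funLeft_apply, ev, Polynomial.eval_prod, this]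
  · ext ⟨i, hi⟩
    simp only [LinearMap.funLeft_apply, ev, LinearMap.coe_mk, AddHom.coe_mk,
      Polynomial.eval_mul, Polynomial.eval_prod, Polynomial.eval_sub, Polynomial.eval_X,
      Polynomial.eval_C]
    ring

/-- If `D = GRS_k(α, v) ⊕ D₁` with `dim D₁ = ℓ` and `I` has `s = |I| < k` elements, then
`dim D_I = dim D − s = k + ℓ − s` and `D_I = GRS_{k−s}(α′, v′) ⊕ D₁′` for suitable
`α′` (pairwise distinct entries), `v′` (nonzero entries) and `D₁′` of dimension `ℓ`. -/
theorem stmt7 {F : Type*} [Field F] [Fintype F] {n k ℓ : ℕ} (hkn : k ≤ n)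
    (α v : Fin n → F) (hα : Function.Injective α) (hv : ∀ i, v i ≠ 0)
    (D1 : Submodule F (Fin n → F)) (hD1 : Module.finrank F D1 = ℓ)
    (hdisj : GRS k α v ⊓ D1 = ⊥)
    (I : Finset (Fin n)) (hs : I.card < k) :
    Module.finrank F (shorten (GRS k α v ⊔ D1) (I : Set (Fin n))) =
      Module.finrank F ↥(GRS k α v ⊔ D1) - I.card ∧
    Module.finrank F (shorten (GRS k α v ⊔ D1) (I : Set (Fin n))) = k + ℓ - I.card ∧
    ∃ (α' v' : {i : Fin n // i ∉ (I : Set (Fin n))} → F)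
      (D1' : Submodule F ({i : Fin n // i ∉ (I : Set (Fin n))} → F)),
      Function.Injective α' ∧ (∀ j, v' j ≠ 0) ∧
      Module.finrank F D1' = ℓ ∧
      shorten (GRS k α v ⊔ D1) (I : Set (Fin n)) = GRS (k - I.card) α' v' ⊔ D1' ∧
      GRS (k - I.card) α' v' ⊓ D1' = ⊥ := by
  classical
  have hG : Module.finrank F (GRS k α v) = k := finrank_GRS k α v hα hv (by simpa using hkn)
  have hD : Module.finrank F ↥(GRS k α v ⊔ D1) = k + ℓ := by
    have := Submodule.finrank_sup_add_finrank_inf_eq (GRS k α v) D1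
    rw [hdisj, finrank_bot, hG, hD1] at this
    simpa using this
  have htop : (GRS k α v ⊔ D1).map (LinearMap.funLeft F F
      (fun i : ((I : Set (Fin n))) => (i : Fin n))) = ⊤ := by
    rw [eq_top_iff, ← map_GRS α v hα hv I hs]
    exact Submodule.map_mono le_sup_left
  have hS : Module.finrank F (shorten (GRS k α v ⊔ D1) (I : Set (Fin n))) = k + ℓ - I.card := by
    have := finrank_inf_ker _ _ htop
    rw [← finrank_shorten, hD, Module.finrank_fintype_fun_eq_card] at this
    have hc : Fintype.card ((I : Set (Fin n))) = I.card := by simp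
    omega
  refine ⟨by rw [hD, hS], hS, ?_⟩
  set S := shorten (GRS k α v ⊔ D1) (I : Set (Fin n)) with hSdef
  let α' : {i : Fin n // i ∉ (I : Set (Fin n))} → F := fun j => α j
  let v' : {i : Fin n // i ∉ (I : Set (Fin n))} → F :=
    fun j => v j * ∏ i ∈ I, (α j - α i)
  have hα' : Function.Injective α' := fun a b h => Subtype.ext (hα h)
  have hv' : ∀ j, v' j ≠ 0 := by
    intro j
    refine mul_ne_zero (hv _) (Finset.prod_ne_zero_iff.2 fun i hi => sub_ne_zero.2 fun h => ?_)
    exact j.2 (by rw [hα h]; exact hi)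
  have hle : GRS (k - I.card) α' v' ≤ S :=
    (GRS_le_shorten α v I hs).trans
      (Submodule.map_mono (inf_le_inf_right _ le_sup_left))
  have hcard : Fintype.card {i : Fin n // i ∉ (I : Set (Fin n))} = n - I.card := by
    rw [Fintype.card_subtype_compl]; simp
  have hG' : Module.finrank F (GRS (k - I.card) α' v') = k - I.card :=
    finrank_GRS _ α' v' hα' hv' (by rw [hcard]; omega)
  obtain ⟨E, hE⟩ := Submodule.exists_isCompl (GRS (k - I.card) α' v')
  have hsup : GRS (k - I.card) α' v' ⊔ (E ⊓ S) = S := by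
    rw [← sup_inf_assoc_of_le E hle, hE.sup_eq_top, top_inf_eq]
  have hinf : GRS (k - I.card) α' v' ⊓ (E ⊓ S) = ⊥ := by
    rw [← inf_assoc, hE.inf_eq_bot, bot_inf_eq]
  refine ⟨α', v', E ⊓ S, hα', hv', ?_, hsup.symm, hinf⟩
  have := Submodule.finrank_sup_add_finrank_inf_eq (GRS (k - I.card) α' v') (E ⊓ S)
  rw [hsup, hinf, finrank_bot, hS, hG'] at this
  omega
end

section
/- Let C ⊆ F_q^n be an ℓ-qGRS code with respect to α, v and dimension parameter k, and let I ⊆ {1,…,n} with |I| ≤ k − ℓ. If dim(C_I) = k − |I|, then the shortening C_I ⊆ F_q^{n−|I|} is an ℓ′-qGRS code for some ℓ′ ≤ ℓ; that is, there exist ℓ′ ≤ ℓ and α′, v′ ∈ F_q^{n−|I|} (α′ with pairwise distinct entries, v′ with all nonzero entries) such that C_I is an ℓ′-qGRS code with respect to α′, v′ and dimension parameter k − |I|. -/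
open Polynomial

/-- `C` is an `ℓ`-quasi-GRS code with respect to `α`, `v` and dimension parameter `k`:
`C = C₀ ⊕ C₁` where `C₀` has codimension `ℓ` in `GRS_k(α,v)` and `C₁` is
`ℓ`-dimensional with `C₁ ∩ GRS_k(α,v) = 0`. -/
def IsQGRS {F : Type*} [Field F] {ι : Type*} (ℓ k : ℕ) (α v : ι → F)
    (C : Submodule F (ι → F)) : Prop :=
  ∃ C0 C1 : Submodule F (ι → F),
    C = C0 ⊔ C1 ∧ C0 ⊓ C1 = ⊥ ∧
    C0 ≤ GRS k α v ∧
    Module.finrank F C0 + ℓ = Module.finrank F (GRS k α v) ∧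
    Module.finrank F C1 = ℓ ∧
    C1 ⊓ GRS k α v = ⊥

theorem finrank_GRS_aux {F : Type*} [Field F] {ι : Type*} [Fintype ι] (m : ℕ)
    (α v : ι → F) (hα : Function.Injective α) (hv : ∀ i, v i ≠ 0) (hm : m ≤ Fintype.card ι) :
    Module.finrank F (GRS m α v) = m := by
  classical
  have hinj : Function.Injective ((ev α v).domRestrict (Polynomial.degreeLT F m)) := by
    rw [← LinearMap.ker_eq_bot, LinearMap.ker_eq_bot']
    rintro ⟨f, hf⟩ h
    have h0 : ∀ i, f.eval (α i) = 0 := by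
      intro i
      have := congrFun h i
      simpa [ev, hv i] using this
    rw [Polynomial.mem_degreeLT] at hf
    have : f = 0 := by
      apply Polynomial.eq_zero_of_degree_lt_of_eval_finset_eq_zero (Finset.univ.image α)
      · rw [Finset.card_image_of_injective _ hα, Finset.card_univ]
        exact lt_of_lt_of_le hf (by exact_mod_cast hm)
      · intro x hx
        obtain ⟨i, _, rfl⟩ := Finset.mem_image.1 hx
        exact h0 i
    exact Subtype.ext this
  have h1 : GRS m α v = LinearMap.range ((ev α v).domRestrict (Polynomial.degreeLT F m)) := by
    rw [LinearMap.range_domRestrict]; rfl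
  rw [h1, LinearMap.finrank_range_of_inj hinj, (Polynomial.degreeLTEquiv F m).finrank_eq]
  simp

theorem shorten_GRS_le {F : Type*} [Field F] {n k : ℕ}
    (α v : Fin n → F) (hα : Function.Injective α) (hv : ∀ i, v i ≠ 0)
    (I : Finset (Fin n)) (hI : I.card ≤ k) :
    shorten (GRS k α v) (I : Set (Fin n)) ≤
      GRS (k - I.card) (fun j : {i : Fin n // i ∉ (I : Set (Fin n))} => α j)
        (fun j => v j * ∏ i ∈ I, (α j - α i)) := by
  classical
  rintro _ ⟨x, ⟨⟨f, hf, rfl⟩, hx⟩, rfl⟩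
  have h0 : ∀ i ∈ I, f.eval (α i) = 0 := by
    intro i hi
    have := congrFun (LinearMap.mem_ker.1 hx) ⟨i, hi⟩
    simpa [ev, hv i, LinearMap.funLeft_apply] using this
  have hd : (∏ i ∈ I, (X - C (α i))) ∣ f := by
    apply Finset.prod_dvd_of_coprime
    · intro i _ j _ hij
      exact Polynomial.pairwise_coprime_X_sub_C hα hij
    · intro i hi
      exact Polynomial.dvd_iff_isRoot.2 (h0 i hi)
  obtain ⟨g, rfl⟩ := hd
  refine ⟨g, ?_, ?_⟩
  · have hf' := Polynomial.mem_degreeLT.1 hf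
    apply Polynomial.mem_degreeLT.2
    by_cases hg : g = 0
    · simp [hg]
    rw [Polynomial.degree_mul, Polynomial.degree_prod, Polynomial.degree_eq_natDegree hg] at hf'
    simp only [Polynomial.degree_X_sub_C, Finset.sum_const, nsmul_eq_mul, mul_one] at hf'
    rw [Polynomial.degree_eq_natDegree hg]
    have h2 : I.card + g.natDegree < k := by exact_mod_cast hf'
    have h3 : g.natDegree < k - I.card := by omega
    exact_mod_cast h3
  · ext j
    simp [ev, LinearMap.funLeft_apply, Polynomial.eval_prod, mul_assoc]

/-- Shortening an `ℓ`-qGRS code of dimension `k` at `I` with `|I| ≤ k − ℓ`, provided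
`dim C_I = k − |I|`, yields an `ℓ′`-qGRS code for some `ℓ′ ≤ ℓ`. -/
theorem stmt8 {F : Type*} [Field F] [Fintype F] {n k ℓ : ℕ} (hkn : k ≤ n)
    (α v : Fin n → F) (hα : Function.Injective α) (hv : ∀ i, v i ≠ 0)
    (C : Submodule F (Fin n → F)) (hC : IsQGRS ℓ k α v C)
    (I : Finset (Fin n)) (hI : I.card ≤ k - ℓ)
    (hdim : Module.finrank F (shorten C (I : Set (Fin n))) = k - I.card) :
    ∃ ℓ' ≤ ℓ, ∃ α' v' : {i : Fin n // i ∉ (I : Set (Fin n))} → F,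
      Function.Injective α' ∧ (∀ j, v' j ≠ 0) ∧
      IsQGRS ℓ' (k - I.card) α' v' (shorten C (I : Set (Fin n))) := by
  classical
  have hIk : I.card ≤ k := hI.trans (Nat.sub_le _ _)
  obtain ⟨C0, C1, hsup, -, hC0, -, hC1, -⟩ := hC
  set α' : {i : Fin n // i ∉ (I : Set (Fin n))} → F := fun j => α j with hα'
  set v' : {i : Fin n // i ∉ (I : Set (Fin n))} → F :=
    fun j => v j * ∏ i ∈ I, (α j - α i) with hv'
  have hα'i : Function.Injective α' := fun a b h => Subtype.ext (hα h)
  have hv'0 : ∀ j, v' j ≠ 0 := by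
    intro j
    refine mul_ne_zero (hv _) (Finset.prod_ne_zero_iff.2 fun i hi => sub_ne_zero.2 fun h => ?_)
    exact j.2 (by rw [hα h]; exact hi)
  have hcard : k - I.card ≤ Fintype.card {i : Fin n // i ∉ (I : Set (Fin n))} := by
    have : Fintype.card {i : Fin n // i ∉ (I : Set (Fin n))} = n - I.card := by
      simp [Fintype.card_subtype_compl]
    omega
  have hG' := finrank_GRS_aux (k - I.card) α' v' hα'i hv'0 hcard
  have hle : shorten (GRS k α v) (I : Set (Fin n)) ≤ GRS (k - I.card) α' v' :=
    shorten_GRS_le α v hα hv I hIk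
  set D := shorten C (I : Set (Fin n)) with hD
  set G' := GRS (k - I.card) α' v' with hGdef
  set K := LinearMap.ker (LinearMap.funLeft F F (fun i : (I : Set (Fin n)) => (i : Fin n))) with hK
  set ρ := LinearMap.funLeft F F (fun j : {i : Fin n // i ∉ (I : Set (Fin n))} => (j : Fin n))
    with hρ
  have hC0C : C0 ≤ C := hsup ▸ le_sup_left
  have hsub : (C0 ⊓ K).map ρ ≤ D ⊓ G' := by
    refine le_inf (Submodule.map_mono (inf_le_inf_right _ hC0C)) (le_trans ?_ hle)
    exact Submodule.map_mono (inf_le_inf_right _ hC0)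
  have hinj : ∀ x ∈ K, ρ x = 0 → x = 0 := by
    intro x hx h
    funext i
    by_cases hi : i ∈ (I : Set (Fin n))
    · exact congrFun (LinearMap.mem_ker.1 hx) ⟨i, hi⟩
    · exact congrFun h ⟨i, hi⟩
  have hr1 : Module.finrank F ((C0 ⊓ K).map ρ) = Module.finrank F (C0 ⊓ K : Submodule F _) := by
    have hi : Function.Injective (ρ.domRestrict (C0 ⊓ K)) := by
      rw [← LinearMap.ker_eq_bot, LinearMap.ker_eq_bot']
      rintro ⟨x, hx⟩ h
      exact Subtype.ext (hinj x hx.2 h)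
    rw [← LinearMap.range_domRestrict, LinearMap.finrank_range_of_inj hi]
  have hr2 : Module.finrank F D ≤ Module.finrank F (C ⊓ K : Submodule F _) :=
    Submodule.finrank_map_le _ _
  have hr3 := Submodule.finrank_sup_add_finrank_inf_eq C0 (C ⊓ K)
  have hr4 : Module.finrank F (C0 ⊔ (C ⊓ K) : Submodule F _) ≤ Module.finrank F C :=
    Submodule.finrank_mono (sup_le hC0C inf_le_left)
  have hr5 : C0 ⊓ (C ⊓ K) = C0 ⊓ K := by
    rw [← inf_assoc, inf_eq_left.2 hC0C]
  rw [hr5] at hr3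
  have hr6 : Module.finrank F C ≤ Module.finrank F C0 + ℓ := by
    rw [hsup, ← hC1]
    exact Submodule.finrank_add_le_finrank_add_finrank _ _
  have hr7 := Submodule.finrank_mono hsub
  rw [hr1] at hr7
  obtain ⟨D1, hD1⟩ : ∃ D1 : Submodule F _, D1 ⊓ (D ⊓ G') = ⊥ ∧ D1 ⊔ (D ⊓ G') = D := by
    obtain ⟨E, hE⟩ := Submodule.exists_isCompl (D ⊓ G')
    refine ⟨E ⊓ D, ?_, ?_⟩
    · rw [eq_bot_iff, ← hE.inf_eq_bot]
      exact le_inf inf_le_right (inf_le_left.trans inf_le_left)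
    · rw [sup_comm, ← sup_inf_assoc_of_le _ (inf_le_left : D ⊓ G' ≤ D), hE.sup_eq_top, top_inf_eq]
  have hr8 := Submodule.finrank_sup_add_finrank_inf_eq D1 (D ⊓ G')
  rw [hD1.1, hD1.2, finrank_bot] at hr8
  have hD1D : D1 ≤ D := by
    calc D1 ≤ D1 ⊔ (D ⊓ G') := le_sup_left
      _ = D := hD1.2
  refine ⟨Module.finrank F D1, by omega, α', v', hα'i, hv'0, D ⊓ G', D1, ?_, ?_, inf_le_right,
    ?_, rfl, ?_⟩
  · rw [sup_comm]; exact hD1.2.symm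
  · rw [inf_comm]; exact hD1.1
  · refine Eq.trans ?_ hG'.symm
    omega
  · rw [← hD1.1, ← inf_assoc, inf_eq_left.2 hD1D]
end

section
/- Let ℓ ≤ k ≤ d and let C = ev_{α,v}(P) ⊆ F_q^n, where P = P_0 ⊕ P_1 ⊆ F_q[x], P_0 is a subspace of codimension ℓ of F_q[x]_{<k}, P_1 is a subspace of dimension ℓ with P_1 ∩ F_q[x]_{<k} = 0, and every element of P has degree ≤ d. Then dim(C ⋆ C) ≤ min{ (ℓ+2)k − 1 − ℓ(ℓ−1)/2, k + d + ℓ(ℓ+1)/2, 2d + 1 }. -/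
open Polynomial

lemma aux_mul {F : Type*} [Field F] (A B : Submodule F (Polynomial F))
    [Module.Finite F A] [Module.Finite F B] :
    Module.finrank F (A * B : Submodule F (Polynomial F)) ≤ Module.finrank F A * Module.finrank F B := by
  rw [← Submodule.mulMap_range, ← Module.finrank_tensorProduct]
  exact LinearMap.finrank_range_le _

lemma aux_sq {F : Type*} [Field F] (A : Submodule F (Polynomial F))
    [Module.Finite F A] :
    Module.finrank F (A * A : Submodule F (Polynomial F)) ≤
      Module.finrank F A * (Module.finrank F A + 1) / 2 := by
  let b := Module.finBasis F A
  let g : Sym2 (Fin (Module.finrank F A)) → Polynomial F :=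
    Sym2.lift ⟨fun i j => (b i : Polynomial F) * b j, fun i j => mul_comm _ _⟩
  have hA : A = Submodule.span F (Set.range fun i => (b i : Polynomial F)) := by
    have := congrArg (Submodule.map A.subtype) b.span_eq
    rw [Submodule.map_span, ← Set.range_comp, Submodule.map_top, Submodule.range_subtype] at this
    exact this.symm
  have hle : A * A ≤ Submodule.span F (Set.range g) := by
    conv_lhs => rw [hA]
    rw [Submodule.span_mul_span]
    apply Submodule.span_mono
    rintro _ ⟨_, ⟨i, rfl⟩, _, ⟨j, rfl⟩, rfl⟩
    exact ⟨s(i, j), rfl⟩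
  have : Module.Finite F (Submodule.span F (Set.range g)) :=
    Module.Finite.span_of_finite F (Set.finite_range g)
  refine (Submodule.finrank_mono hle).trans ((finrank_range_le_card g).trans ?_)
  rw [Sym2.card, Fintype.card_fin, Nat.choose_two_right, Nat.add_sub_cancel, Nat.mul_comm]

lemma aux_deg {F : Type*} [Field F] {A B : Submodule F (Polynomial F)} {a b c : ℕ}
    (hA : A ≤ degreeLT F a) (hB : B ≤ degreeLT F b) (hc : a + b ≤ c + 1) :
    A * B ≤ degreeLT F c := by
  rw [Submodule.mul_le]
  intro f hf g hg
  have h1 := mem_degreeLT.1 (hA hf)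
  have h2 := mem_degreeLT.1 (hB hg)
  rw [mem_degreeLT]
  by_cases hf0 : f = 0
  · simp [hf0]
  by_cases hg0 : g = 0
  · simp [hg0]
  rw [degree_mul, degree_eq_natDegree hf0, degree_eq_natDegree hg0] at *
  norm_cast at *
  omega

lemma aux_fin (F : Type*) [Field F] (a : ℕ) : Module.finrank F (degreeLT F a) = a := by
  rw [(degreeLTEquiv F a).finrank_eq]; simp

lemma aux_ev {F : Type*} [Field F] {n : ℕ} (α v : Fin n → F) (P : Submodule F (Polynomial F)) :
    schurProduct F (P.map (ev α v)) (P.map (ev α v)) ≤ (P * P).map (ev α (v * v)) := by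
  unfold schurProduct
  rw [Submodule.span_le]
  rintro _ ⟨_, ⟨f, hf, rfl⟩, _, ⟨g, hg, rfl⟩, rfl⟩
  refine ⟨f * g, Submodule.mul_mem_mul hf hg, ?_⟩
  ext i
  simp [ev]
  ring

/-- Upper bound for the Schur square of an `ℓ`-qGRS code `C = ev_{α,v}(P)`, where
`P = P₀ ⊕ P₁` with `P₀` of codimension `ℓ` in `F[x]_{<k}`, `P₁` of dimension `ℓ`
meeting `F[x]_{<k}` trivially, and all elements of `P` of degree ≤ `d`. -/
theorem stmt9 {F : Type*} [Field F] [Fintype F] {n k ℓ d : ℕ}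
    (hℓk : ℓ ≤ k) (hkd : k ≤ d)
    (α v : Fin n → F) (hα : Function.Injective α) (hv : ∀ i, v i ≠ 0)
    (P P0 P1 : Submodule F (Polynomial F))
    (hP : P = P0 ⊔ P1) (hdisj : P0 ⊓ P1 = ⊥)
    (hP0le : P0 ≤ Polynomial.degreeLT F k)
    (hcodim : Module.finrank F P0 + ℓ = Module.finrank F (Polynomial.degreeLT F k))
    (hP1 : Module.finrank F P1 = ℓ)
    (hP1int : P1 ⊓ Polynomial.degreeLT F k = ⊥)
    (hdeg : P ≤ Polynomial.degreeLT F (d + 1)) :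
    Module.finrank F (schurProduct F (P.map (ev α v)) (P.map (ev α v))) ≤
      min (min ((ℓ + 2) * k - 1 - ℓ * (ℓ - 1) / 2) (k + d + ℓ * (ℓ + 1) / 2))
        (2 * d + 1) := by
  have fd : ∀ a, Module.Finite F (degreeLT F a) := fun a =>
    Module.Finite.equiv (degreeLTEquiv F a).symm
  have fin_le : ∀ {A : Submodule F (Polynomial F)} {a : ℕ}, A ≤ degreeLT F a → Module.Finite F A :=
    fun h => Submodule.finiteDimensional_of_le h
  have rk_le : ∀ {A : Submodule F (Polynomial F)} {a : ℕ}, A ≤ degreeLT F a →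
      Module.finrank F A ≤ a := fun {A a} h => by
    have := Submodule.finrank_mono h
    rwa [aux_fin] at this
  have hP1le : P1 ≤ degreeLT F (d + 1) := le_trans (hP ▸ le_sup_right) hdeg
  have hPP : P * P ≤ degreeLT F (2 * d + 1) := aux_deg hdeg hdeg (by omega)
  have i0 := fin_le hP0le
  have i1 := fin_le hP1le
  have i := fin_le hPP
  rw [aux_fin] at hcodim
  have h00 : P0 * P0 ≤ degreeLT F (2 * k - 1) := aux_deg hP0le hP0le (by omega)
  have h01 : P0 * P1 ≤ degreeLT F (k + d) := aux_deg hP0le hP1le (by omega)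
  have h00' : P0 * P0 ≤ degreeLT F (k + d) := aux_deg hP0le hP0le (by omega)
  have h11 : P1 * P1 ≤ degreeLT F (2 * d + 1) := aux_deg hP1le hP1le (by omega)
  have e : P * P = (P0 * P0 ⊔ P0 * P1) ⊔ P1 * P1 := by
    rw [hP, Submodule.sup_mul, Submodule.mul_sup, Submodule.mul_sup, mul_comm P1 P0, sup_assoc,
      sup_assoc, ← sup_assoc (P0 * P1) (P0 * P1), sup_idem]
  have j00 := fin_le h00
  have j01 := fin_le h01
  have j11 := fin_le h11
  have s11 := aux_sq P1
  have s01 := aux_mul P0 P1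
  have r00 := rk_le h00
  have r0 := rk_le (sup_le h00' h01)
  have t := Submodule.finrank_add_le_finrank_add_finrank (P0 * P0 ⊔ P0 * P1) (P1 * P1)
  have t' := Submodule.finrank_add_le_finrank_add_finrank (P0 * P0) (P0 * P1)
  rw [← e] at t
  rw [hP1] at s11 s01
  refine (Submodule.finrank_mono (aux_ev α v P)).trans
    ((Submodule.finrank_map_le _ _).trans (le_min (le_min ?_ ?_) (rk_le hPP)))
  · obtain ⟨m, rfl⟩ := Nat.exists_eq_add_of_le hℓk
    have hm : Module.finrank F P0 = m := by omega
    rw [hm] at s01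
    have e1 : ℓ * (ℓ + 1) / 2 + ℓ * (ℓ - 1) / 2 = ℓ * ℓ := by
      rcases ℓ with _ | l
      · rfl
      · have h1 := Nat.even_mul_succ_self l
        have h2 := Nat.even_mul_succ_self (l + 1)
        obtain ⟨a, ha⟩ := h1
        obtain ⟨c, hc⟩ := h2
        have : (l + 1) * (l + 1 - 1) = a + a := by rw [← ha, Nat.add_sub_cancel, mul_comm]
        rw [this, show (l + 1) * (l + 1 + 1) = c + c from hc]
        have : (c + c) + (a + a) = 2 * ((l + 1) * (l + 1)) := by rw [← hc, ← ha]; ring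
        omega
    have e2 : (ℓ + 2) * (ℓ + m) = ℓ * ℓ + m * ℓ + 2 * (ℓ + m) := by ring
    rw [e2]
    rcases Nat.eq_zero_or_pos (ℓ + m) with h0 | h0
    · obtain ⟨rfl, rfl⟩ : ℓ = 0 ∧ m = 0 := by omega
      omega
    · omega
  · omega
end

section
/- Let ℓ ≤ k ≤ d and let C = ev_{α,v}(P) ⊆ F_q^n, where P = P_0 ⊕ P_1 ⊆ F_q[x], P_0 is a subspace of codimension ℓ of F_q[x]_{<k}, P_1 is a subspace of dimension ℓ with P_1 ∩ F_q[x]_{<k} = 0, and every element of P has degree ≤ d (so C is an ℓ-qGRS code of dimension k). Let I ⊆ {1,…,n} with |I| ≤ k − ℓ and suppose dim(C_I) = k − |I|. Then dim(C_I ⋆ C_I) ≤ min{ (ℓ+2)(k−|I|) − 1 − ℓ(ℓ−1)/2, k + d − 2|I| + ℓ(ℓ+1)/2, 2(d − |I|) + 1 }. -/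
open Polynomial

theorem aux_schur_eq {F : Type*} [Field F] {ι : Type*} (A B : Submodule F (ι → F)) :
    schurProduct F A B = A * B := by
  apply le_antisymm
  · refine Submodule.span_le.2 ?_
    rintro x ⟨a, ha, b, hb, rfl⟩
    exact Submodule.mul_mem_mul ha hb
  · refine Submodule.mul_le.2 fun a ha b hb => Submodule.subset_span ⟨a, ha, b, hb, rfl⟩

theorem aux_single {F : Type*} [Field F] {ι : Type*} [Finite ι] (x : ι → F)
    (B : Submodule F (ι → F)) :
    Module.finrank F ((F ∙ x) * B : Submodule F (ι → F)) ≤ Module.finrank F B := by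
  have : ((F ∙ x) * B : Submodule F (ι → F)) ≤ B.map (LinearMap.mulLeft F x) := by
    refine Submodule.mul_le.2 fun a ha b hb => ?_
    obtain ⟨c, rfl⟩ := Submodule.mem_span_singleton.1 ha
    exact ⟨c • b, B.smul_mem c hb, by simp⟩
  exact (Submodule.finrank_mono this).trans (Submodule.finrank_map_le _ _)

theorem aux_sup {F : Type*} [Field F] {ι : Type*} [Finite ι] (A B : Submodule F (ι → F)) :
    Module.finrank F (A ⊔ B : Submodule F (ι → F)) ≤ Module.finrank F A + Module.finrank F B := by
  have := Submodule.finrank_sup_add_finrank_inf_eq A B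
  omega

theorem aux_fin_s10 {F : Type*} [Field F] {ι : Type*} [Finite ι] (R : Submodule F (ι → F)) :
    ∀ (e : ℕ) (b : Fin e → (ι → F)),
    2 * Module.finrank F (Submodule.span F (Set.range b) * (Submodule.span F (Set.range b) ⊔ R) :
      Submodule F (ι → F)) ≤ 2 * (e * Module.finrank F R) + e * (e + 1) := by
  intro e
  induction e with
  | zero => intro b; simp
  | succ e ih =>
    intro b
    have hb : Submodule.span F (Set.range b) =
        (F ∙ b 0) ⊔ Submodule.span F (Set.range (Fin.tail b)) := by
      rw [← Submodule.span_union]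
      congr 1
      conv_lhs => rw [← Fin.cons_self_tail b]
      rw [Fin.range_cons]; rfl
    have h1 := ih (Fin.tail b)
    have hr : Module.finrank F (Submodule.span F (Set.range b)) ≤ e + 1 := by
      simpa [Set.finrank] using finrank_range_le_card (R := F) b
    have h2 := aux_single (b 0) (Submodule.span F (Set.range b) ⊔ R)
    have h3 := aux_sup (Submodule.span F (Set.range b)) R
    have hle : (Submodule.span F (Set.range b) * (Submodule.span F (Set.range b) ⊔ R)) ≤
        ((F ∙ b 0) * (Submodule.span F (Set.range b) ⊔ R)) ⊔
        (Submodule.span F (Set.range (Fin.tail b)) *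
          (Submodule.span F (Set.range (Fin.tail b)) ⊔ R)) := by
      rw [hb]
      set X := F ∙ b 0
      set S := Submodule.span F (Set.range (Fin.tail b))
      have : S * X ≤ X * (X ⊔ S ⊔ R) := by
        rw [mul_comm]; exact mul_le_mul' le_rfl (le_sup_right.trans le_sup_left)
      rw [Submodule.sup_mul]
      refine sup_le le_sup_left ?_
      rw [sup_assoc, Submodule.mul_sup S X]
      refine sup_le ?_ le_sup_right
      rw [← sup_assoc]
      exact this.trans le_sup_left
    have h4 := (Submodule.finrank_mono hle).trans (aux_sup _ _)
    nlinarith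

theorem aux_prod {F : Type*} [Field F] {ι : Type*} [Finite ι] (E R : Submodule F (ι → F)) :
    2 * Module.finrank F (E * (E ⊔ R) : Submodule F (ι → F)) ≤
      2 * (Module.finrank F E * Module.finrank F R)
        + Module.finrank F E * (Module.finrank F E + 1) := by
  have b := Module.finBasis F E
  have h := aux_fin_s10 R _ (fun i => (b i : ι → F))
  have : Submodule.span F (Set.range (fun i => (b i : ι → F))) = E := by
    have h2 : Set.range (fun i => (b i : ι → F)) = E.subtype '' Set.range b := by
      rw [← Set.range_comp]; rfl
    rw [h2, ← Submodule.map_span, b.span_eq]; simp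
  rwa [this] at h

theorem aux_finrank_degreeLT (F : Type*) [Field F] (n : ℕ) :
    Module.finrank F (degreeLT F n) = n := by
  rw [(degreeLTEquiv F n).finrank_eq]; simp

theorem aux_fd (F : Type*) [Field F] (n : ℕ) : FiniteDimensional F (degreeLT F n) :=
  (degreeLTEquiv F n).symm.finiteDimensional

theorem aux_ev_s10 {F : Type*} [Field F] {ι : Type*} [Finite ι] (α u : ι → F) (a b : ℕ)
    (A B : Submodule F (ι → F)) (hA : A ≤ (degreeLT F a).map (ev α u))
    (hB : B ≤ (degreeLT F b).map (ev α u)) :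
    Module.finrank F (A * B : Submodule F (ι → F)) ≤ a + b - 1 := by
  have hle : A * B ≤ (degreeLT F (a + b - 1)).map (ev α (u * u)) := by
    refine Submodule.mul_le.2 fun x hx y hy => ?_
    obtain ⟨f, hf, rfl⟩ := hA hx
    obtain ⟨g, hg, rfl⟩ := hB hy
    refine ⟨f * g, ?_, ?_⟩
    · by_cases hf0 : f = 0
      · simp [hf0]
      by_cases hg0 : g = 0
      · simp [hg0]
      simp only [SetLike.mem_coe, mem_degreeLT] at hf hg ⊢
      rw [degree_eq_natDegree hf0] at hf
      rw [degree_eq_natDegree hg0] at hg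
      rw [degree_eq_natDegree (mul_ne_zero hf0 hg0), natDegree_mul hf0 hg0]
      norm_cast at *
      omega
    · ext i; simp [ev]; ring
  have := aux_fd F (a + b - 1)
  have h2 := (Submodule.finrank_mono hle).trans (Submodule.finrank_map_le _ _)
  rwa [aux_finrank_degreeLT] at h2

theorem aux_div {F : Type*} [Field F] {ι : Type*} (α : ι → F) (hα : Function.Injective α)
    (I : Finset ι) (a : ℕ) (f : F[X]) (hf : f ∈ degreeLT F a)
    (h : ∀ i ∈ I, f.eval (α i) = 0) :
    ∃ g ∈ degreeLT F (a - I.card), f = (∏ i ∈ I, (X - C (α i))) * g := by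
  have hd : (∏ i ∈ I, (X - C (α i))) ∣ f := by
    refine Finset.prod_dvd_of_coprime ?_ fun i hi => dvd_iff_isRoot.2 (h i hi)
    intro i _ j _ hij
    exact pairwise_coprime_X_sub_C hα hij
  obtain ⟨g, rfl⟩ := hd
  refine ⟨g, ?_, rfl⟩
  by_cases hg : g = 0
  · simp [hg]
  have hm : (∏ i ∈ I, (X - C (α i))).Monic := monic_prod_of_monic _ _ fun i _ => monic_X_sub_C _
  have hn : (∏ i ∈ I, (X - C (α i))).natDegree = I.card := by
    rw [natDegree_prod_of_monic _ _ fun i _ => monic_X_sub_C _]; simp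
  rw [mem_degreeLT, degree_eq_natDegree (mul_ne_zero hm.ne_zero hg),
    natDegree_mul hm.ne_zero hg, hn] at hf
  rw [mem_degreeLT, degree_eq_natDegree hg]
  norm_cast at *
  omega

/-- Upper bound for the Schur square of a shortening of an `ℓ`-qGRS code
`C = ev_{α,v}(P)`, where `P = P₀ ⊕ P₁` with `P₀` of codimension `ℓ` in `F[x]_{<k}`,
`P₁` of dimension `ℓ` meeting `F[x]_{<k}` trivially, all elements of `P` of degree
≤ `d`, `|I| ≤ k − ℓ` and `dim C_I = k − |I|`. -/
theorem stmt10 {F : Type*} [Field F] [Fintype F] {n k ℓ d : ℕ}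
    (hℓk : ℓ ≤ k) (hkd : k ≤ d)
    (α v : Fin n → F) (hα : Function.Injective α) (hv : ∀ i, v i ≠ 0)
    (P P0 P1 : Submodule F (Polynomial F))
    (hP : P = P0 ⊔ P1) (hdisj : P0 ⊓ P1 = ⊥)
    (hP0le : P0 ≤ Polynomial.degreeLT F k)
    (hcodim : Module.finrank F P0 + ℓ = Module.finrank F (Polynomial.degreeLT F k))
    (hP1 : Module.finrank F P1 = ℓ)
    (hP1int : P1 ⊓ Polynomial.degreeLT F k = ⊥)
    (hdeg : P ≤ Polynomial.degreeLT F (d + 1))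
    (I : Finset (Fin n)) (hI : I.card ≤ k - ℓ)
    (hdim : Module.finrank F (shorten (P.map (ev α v)) (I : Set (Fin n))) = k - I.card) :
    Module.finrank F
        (schurProduct F (shorten (P.map (ev α v)) (I : Set (Fin n)))
          (shorten (P.map (ev α v)) (I : Set (Fin n)))) ≤
      min (min ((ℓ + 2) * (k - I.card) - 1 - ℓ * (ℓ - 1) / 2)
          (k + d - 2 * I.card + ℓ * (ℓ + 1) / 2))
        (2 * (d - I.card) + 1) := by
  classical
  set J := {i : Fin n // i ∉ (I : Set (Fin n))}
  set D := shorten (P.map (ev α v)) (I : Set (Fin n)) with hD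
  rw [aux_schur_eq]
  have fdk := aux_fd F k
  have fdd := aux_fd F (d + 1)
  rw [aux_finrank_degreeLT] at hcodim
  set φ : F[X] →ₗ[F] (J → F) := ev (fun j : J => α j) (fun j : J => v j) with hφ
  set G : F[X] := ∏ i ∈ I, (X - C (α i)) with hG
  set u : J → F := fun j => v j * G.eval (α j) with hu
  let Z : Submodule F F[X] :=
    { carrier := {f | ∀ i ∈ I, f.eval (α i) = 0}
      add_mem' := fun {a b} ha hb i hi => by simp [ha i hi, hb i hi]
      zero_mem' := fun i hi => by simp
      smul_mem' := fun c f hf i hi => by simp [hf i hi] }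
  have hDQ : D = (P ⊓ Z).map φ := by
    ext x
    constructor
    · rintro ⟨y, ⟨⟨f, hf, rfl⟩, hy⟩, rfl⟩
      refine ⟨f, ⟨hf, fun i hi => ?_⟩, rfl⟩
      have := congrFun (LinearMap.mem_ker.1 hy) ⟨i, hi⟩
      simpa [ev, LinearMap.funLeft_apply, hv i] using this
    · rintro ⟨f, ⟨hf, hz⟩, rfl⟩
      refine ⟨ev α v f, ⟨⟨f, hf, rfl⟩, ?_⟩, rfl⟩
      refine LinearMap.mem_ker.2 ?_
      ext ⟨i, hi⟩
      have := hz i hi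
      simp [ev, LinearMap.funLeft_apply, this]
  have key : ∀ a : ℕ, (degreeLT F a ⊓ Z).map φ ≤
      (degreeLT F (a - I.card)).map (ev (fun j : J => α j) u) := by
    rintro a _ ⟨f, ⟨hf, hz⟩, rfl⟩
    obtain ⟨g, hg, rfl⟩ := aux_div α hα I a f hf hz
    refine ⟨g, hg, ?_⟩
    ext j
    simp [hφ, ev, hu, hG, mul_assoc]
  have hDd : D ≤ (degreeLT F (d + 1 - I.card)).map (ev (fun j : J => α j) u) := by
    rw [hDQ]
    exact (Submodule.map_mono (inf_le_inf_right Z hdeg)).trans (key (d + 1))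
  set D0 : Submodule F (J → F) := (P ⊓ Z ⊓ degreeLT F k).map φ with hD0
  have hD0k : D0 ≤ (degreeLT F (k - I.card)).map (ev (fun j : J => α j) u) :=
    (Submodule.map_mono (le_inf inf_le_right (inf_le_left.trans inf_le_right))).trans (key k)
  have hD0D : D0 ≤ D := by rw [hDQ]; exact Submodule.map_mono inf_le_left
  have fdP : FiniteDimensional F P := Submodule.finiteDimensional_of_le hdeg
  have fdP0 : FiniteDimensional F P0 := Submodule.finiteDimensional_of_le hP0le
  have fdP1 : FiniteDimensional F P1 :=
    Submodule.finiteDimensional_of_le (le_sup_right.trans (hP ▸ le_refl P : P0 ⊔ P1 ≤ P))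
  have hPk : Module.finrank F P ≤ k := by
    have := Submodule.finrank_sup_add_finrank_inf_eq P0 P1
    rw [← hP] at this
    omega
  have hrank : Module.finrank F D ≤ Module.finrank F D0 + ℓ := by
    obtain ⟨Q1, hQ1d, hQ1s⟩ :=
      IsModularLattice.exists_disjoint_and_sup_eq (inf_le_left : P ⊓ Z ⊓ degreeLT F k ≤ P ⊓ Z)
    have hQ1le : Q1 ≤ P ⊓ Z := hQ1s ▸ le_sup_right
    have fdQ1 : FiniteDimensional F Q1 :=
      Submodule.finiteDimensional_of_le (hQ1le.trans inf_le_left)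
    have hb : P0 ⊓ Q1 = ⊥ := by
      rw [eq_bot_iff]
      refine le_trans ?_ hQ1d.le_bot
      exact le_inf (le_inf (inf_le_right.trans hQ1le) (inf_le_left.trans hP0le)) inf_le_right
    have h1 := Submodule.finrank_sup_add_finrank_inf_eq P0 Q1
    rw [hb, finrank_bot] at h1
    have h2 : Module.finrank F (P0 ⊔ Q1 : Submodule F F[X]) ≤ Module.finrank F P :=
      Submodule.finrank_mono (sup_le (hP ▸ le_sup_left) (hQ1le.trans inf_le_left))
    have h3 : D = D0 ⊔ Q1.map φ := by rw [hDQ, hD0, ← Submodule.map_sup, hQ1s]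
    have h4 : Module.finrank F D ≤ Module.finrank F D0 + Module.finrank F (Q1.map φ) := by
      have h := aux_sup D0 (Q1.map φ)
      rw [← h3] at h
      exact h
    have h5 := Submodule.finrank_map_le φ Q1
    omega
  obtain ⟨D1, hd, hs⟩ := IsModularLattice.exists_disjoint_and_sup_eq hD0D
  have hsum := Submodule.finrank_sup_add_finrank_inf_eq D0 D1
  rw [hs, hd.eq_bot, finrank_bot, hdim] at hsum
  rw [hdim] at hrank
  have b3 := aux_ev_s10 _ u _ _ D D hDd hDd
  have b2 := aux_ev_s10 _ u _ _ D0 D hD0k hDd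
  have b1 := aux_ev_s10 _ u _ _ D0 D0 hD0k hD0k
  have p1 := aux_prod D1 D0
  have p2 := aux_prod D1 ⊥
  rw [sup_bot_eq, finrank_bot] at p2
  have e1 : D * D ≤ D0 * D0 ⊔ D1 * (D1 ⊔ D0) := by
    rw [← hs, Submodule.sup_mul, Submodule.mul_sup D0, mul_comm D0 D1, sup_comm D0 D1]
    exact sup_le (sup_le le_sup_left
      ((mul_le_mul' le_rfl le_sup_right).trans le_sup_right)) le_sup_right
  have e2 : D * D ≤ D0 * D ⊔ D1 * D1 := by
    conv_lhs => rw [← hs, Submodule.sup_mul]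
    rw [hs]
    refine sup_le le_sup_left ?_
    conv_lhs => rw [← hs, Submodule.mul_sup, mul_comm D1 D0]
    exact sup_le ((mul_le_mul' le_rfl (hs ▸ le_sup_right)).trans le_sup_left) le_sup_right
  have f1 := (Submodule.finrank_mono e1).trans (aux_sup _ _)
  have f2 := (Submodule.finrank_mono e2).trans (aux_sup _ _)
  have hE : Module.finrank F D1 ≤ ℓ := by omega
  generalize Module.finrank F D1 = e at *
  generalize Module.finrank F D0 = r at *
  generalize Module.finrank F (D * D : Submodule F (J → F)) = N at *
  generalize Module.finrank F (D0 * D0 : Submodule F (J → F)) = N0 at *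
  generalize Module.finrank F (D0 * D : Submodule F (J → F)) = N2 at *
  generalize Module.finrank F (D1 * D1 : Submodule F (J → F)) = N3 at *
  generalize Module.finrank F (D1 * (D1 ⊔ D0) : Submodule F (J → F)) = N4 at *
  have hsk : I.card ≤ k := hI.trans (Nat.sub_le _ _)
  refine le_min (le_min ?_ ?_) (by omega)
  · have hml : ℓ ≤ k - I.card := by omega
    generalize k - I.card = m at *
    rcases Nat.eq_zero_or_pos m with hm | hm
    · have : e = 0 := by omega
      subst this
      omega
    · obtain ⟨t, rfl⟩ := Nat.exists_eq_add_of_le hE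
      have hc : 2 * ((e + t) * (e + t - 1) / 2) = (e + t) * (e + t - 1) :=
        Nat.mul_div_cancel' (Nat.even_mul_pred_self _).two_dvd
      have hc' : (e + t) * (e + t - 1) + (e + t) = (e + t) * (e + t) := by
        cases h : e + t with
        | zero => simp
        | succ a => simp; ring
      have : N + 1 + (e + t) * (e + t - 1) / 2 ≤ (e + t + 2) * m := by
        have h1 : N + 1 ≤ 2 * m + N4 := by omega
        obtain ⟨w, rfl⟩ := Nat.exists_eq_add_of_le hml
        have : r = t + w := by omega
        subst this
        nlinarith
      omega
  · have hc : 2 * (ℓ * (ℓ + 1) / 2) = ℓ * (ℓ + 1) :=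
      Nat.mul_div_cancel' (Nat.even_mul_succ_self _).two_dvd
    have : e * (e + 1) ≤ ℓ * (ℓ + 1) := Nat.mul_le_mul hE (by omega)
    omega
end

section
/- Let 1 ≤ k ≤ n ≤ q, let 0 ≤ h ≤ k−1, 1 ≤ t ≤ n−k, η ∈ F_q \ {0}, and let C = ev_{α,v}(P) where P = span{x^i : 0 ≤ i ≤ k−1, i ≠ h} ⊕ span(x^h + η x^{k−1+t}) (a single-twist TGRS code of dimension k). Then dim(C ⋆ C) ≤ 3k − 1 if t ≥ k, and dim(C ⋆ C) ≤ 2k + t if t < k. Moreover, for any I ⊆ {1,…,n} with |I| ≤ k − 1 such that dim(C_I) = k − |I|, one has dim(C_I ⋆ C_I) ≤ 3(k − |I|) − 1 if t ≥ k − |I|, and dim(C_I ⋆ C_I) ≤ 2(k − |I|) + t if t < k − |I|. -/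
open Polynomial

theorem aux_fr (m : ℕ) {F : Type*} [Field F] : Module.Finite F (degreeLT F m) ∧ Module.finrank F (degreeLT F m) = m := by
  refine ⟨Module.Finite.equiv (degreeLTEquiv F m).symm, ?_⟩
  rw [(degreeLTEquiv F m).finrank_eq]; simp

theorem aux_mul_s12 {F : Type*} [Field F] {A B : Submodule F F[X]} {a b c : ℕ} (hA : A ≤ degreeLT F a)
    (hB : B ≤ degreeLT F b) (hc : a + b ≤ c + 1) : A * B ≤ degreeLT F c := by
  rw [Submodule.mul_le]
  intro p hp q hq
  have h1 := mem_degreeLT.1 (hA hp)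
  have h2 := mem_degreeLT.1 (hB hq)
  rw [mem_degreeLT]
  by_cases hp0 : p = 0
  · simp [hp0]
  by_cases hq0 : q = 0
  · simp [hq0]
  rw [← natDegree_lt_iff_degree_lt hp0] at h1
  rw [← natDegree_lt_iff_degree_lt hq0] at h2
  rw [← natDegree_lt_iff_degree_lt (mul_ne_zero hp0 hq0), natDegree_mul hp0 hq0]
  omega

theorem aux_schur {F : Type*} [Field F] {ι : Type*} (α v : ι → F) (Q : Submodule F F[X]) :
    schurProduct F (Q.map (ev α v)) (Q.map (ev α v)) ≤ (Q * Q).map (ev α (v * v)) := by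
  unfold schurProduct
  rw [Submodule.span_le]
  rintro x ⟨a, ⟨p, hp, rfl⟩, b, ⟨q, hq, rfl⟩, rfl⟩
  refine ⟨p * q, Submodule.mul_mem_mul hp hq, ?_⟩
  ext i
  simp [ev]; ring

theorem aux_sq_s12 {F : Type*} [Field F] (A : Submodule F F[X]) (g : F[X]) (m t : ℕ) (hm : 1 ≤ m)
    (hA : A ≤ degreeLT F m) (hg : g ∈ degreeLT F (m + t))
    (hf : g = 0 ∨ Module.finrank F A ≤ m - 1) :
    let Q := A ⊔ F ∙ g
    Module.Finite F ↥(Q * Q) ∧ Module.finrank F ↥(Q * Q) ≤ 3 * m - 1 ∧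
      Module.finrank F ↥(Q * Q) ≤ 2 * m + t := by
  intro Q
  have hfin := fun n => (aux_fr n (F := F)).1
  have hfr := fun n => (aux_fr n (F := F)).2
  have hAf : Module.Finite F A := Submodule.finiteDimensional_of_le hA
  have hgg : (F ∙ g) ≤ degreeLT F (m + t) := by
    rw [Submodule.span_le]; simpa using hg
  have hAA : A * A ≤ degreeLT F (2 * m - 1) := aux_mul_s12 hA hA (by omega)
  have hAg : A * (F ∙ g) ≤ degreeLT F (2 * m + t - 1) := aux_mul_s12 hA hgg (by omega)
  have hAA' : A * A ≤ degreeLT F (2 * m + t - 1) := aux_mul_s12 hA hA (by omega)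
  have hQQ : Q * Q = (A * A ⊔ A * (F ∙ g)) ⊔ F ∙ (g * g) := by
    simp only [Q, Submodule.sup_mul, Submodule.mul_sup, Submodule.span_mul_span, Set.singleton_mul_singleton]
    rw [mul_comm (F ∙ g) A]
    simp only [sup_assoc, sup_left_comm, sup_idem]
    rw [← sup_assoc (A * (F ∙ g)), sup_idem]
  have f1 : Module.Finite F ↥(A * A) := Submodule.finiteDimensional_of_le hAA
  have f2 : Module.Finite F ↥(A * (F ∙ g)) := Submodule.finiteDimensional_of_le hAg
  have f3 : Module.Finite F ↥(A * A ⊔ A * (F ∙ g)) := Submodule.finite_sup _ _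
  have f4 : Module.Finite F ↥(F ∙ (g * g)) := inferInstance
  have hs : Module.finrank F ↥(F ∙ (g * g)) ≤ 1 := by
    simpa using finrank_span_le_card (R := F) ({g * g} : Set F[X])
  rw [hQQ]
  have e1 := Submodule.finrank_mono hAA
  have e2 := Submodule.finrank_mono (sup_le hAA' hAg)
  rw [hfr] at e1 e2
  have e3 := Submodule.finrank_add_le_finrank_add_finrank (A * A ⊔ A * (F ∙ g)) (F ∙ (g * g))
  have e4 := Submodule.finrank_add_le_finrank_add_finrank (A * A) (A * (F ∙ g))
  have e5 : Module.finrank F ↥(A * (F ∙ g)) ≤ m - 1 := by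
    rcases hf with h0 | hf
    · have : A * (F ∙ g) = ⊥ := by
        rw [h0, Submodule.span_zero_singleton, Submodule.mul_bot]
      rw [this, finrank_bot]
      exact Nat.zero_le _
    · refine le_trans ?_ hf
      have : A * (F ∙ g) = A.map (LinearMap.mulRight F g) := by
        ext x
        simp [Submodule.mem_mul_span_singleton]
      rw [this]
      exact Submodule.finrank_map_le _ _
  exact ⟨Submodule.finite_sup _ _, by omega, by omega⟩

theorem aux_main {F : Type*} [Field F] {ι : Type*} (α v : ι → F) (Q : Submodule F F[X])
    (m t : ℕ) (hm : 1 ≤ m) (h1 : Q ≤ degreeLT F (m + t))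
    (h2 : ∀ q ∈ Q, q.coeff (m - 1 + t) = 0 → q ∈ degreeLT F m) (hf : Module.finrank F Q ≤ m) :
    Module.finrank F (schurProduct F (Q.map (ev α v)) (Q.map (ev α v))) ≤ 3 * m - 1 ∧
    Module.finrank F (schurProduct F (Q.map (ev α v)) (Q.map (ev α v))) ≤ 2 * m + t := by
  have hfin := fun n => (aux_fr n (F := F)).1
  have hQf : Module.Finite F Q := Submodule.finiteDimensional_of_le h1
  obtain ⟨A, g, hA, hg, hor, hQ⟩ : ∃ (A : Submodule F F[X]) (g : F[X]), A ≤ degreeLT F m ∧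
      g ∈ degreeLT F (m + t) ∧ (g = 0 ∨ Module.finrank F A ≤ m - 1) ∧ Q = A ⊔ F ∙ g := by
    by_cases hc : ∀ q ∈ Q, q.coeff (m - 1 + t) = 0
    · exact ⟨Q, 0, fun q hq => h2 q hq (hc q hq), zero_mem _, Or.inl rfl, by simp⟩
    · push Not at hc
      obtain ⟨g, hg, hg0⟩ := hc
      refine ⟨Q ⊓ LinearMap.ker (lcoeff F (m - 1 + t)), g, ?_, h1 hg, Or.inr ?_, ?_⟩
      · rintro q ⟨hq, hq0⟩
        exact h2 q hq (by simpa using hq0)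
      · have : Q ⊓ LinearMap.ker (lcoeff F (m - 1 + t)) < Q := by
          refine lt_of_le_of_ne inf_le_left fun he => hg0 ?_
          have := (he.symm.le hg).2
          simpa using this
        have := Submodule.finrank_lt_finrank_of_lt this
        omega
      · apply le_antisymm
        · intro q hq
          rw [Submodule.mem_sup]
          refine ⟨q - (q.coeff (m - 1 + t) / g.coeff (m - 1 + t)) • g,
            ⟨Q.sub_mem hq (Q.smul_mem _ hg), ?_⟩, _,
            Submodule.smul_mem _ _ (Submodule.mem_span_singleton_self g), sub_add_cancel _ _⟩
          simp [hg0]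
        · refine sup_le inf_le_left ?_
          rw [Submodule.span_le]; simpa using hg
  obtain ⟨f, b1, b2⟩ := aux_sq_s12 A g m t hm hA hg hor
  rw [← hQ] at f b1 b2
  have e1 := Submodule.finrank_mono (aux_schur α v Q)
  have e2 := Submodule.finrank_map_le (ev α (v * v)) (Q * Q)
  exact ⟨by omega, by omega⟩

/-- Schur-square dimension bounds for a single-twist TGRS code and its shortenings:
`dim C² ≤ 3k−1` if `t ≥ k` and `dim C² ≤ 2k+t` if `t < k`; and for a shortening at `I`
with `|I| ≤ k−1` and `dim C_I = k−|I|`, `dim C_I² ≤ 3(k−|I|)−1` if `t ≥ k−|I|` and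
`dim C_I² ≤ 2(k−|I|)+t` if `t < k−|I|`. -/
theorem stmt12 {F : Type*} [Field F] [Fintype F] {n k h t : ℕ}
    (hk1 : 1 ≤ k) (hkn : k ≤ n) (hnq : n ≤ Fintype.card F)
    (hh : h ≤ k - 1) (ht1 : 1 ≤ t) (ht2 : t ≤ n - k)
    (η : F) (hη : η ≠ 0)
    (α v : Fin n → F) (hα : Function.Injective α) (hv : ∀ i, v i ≠ 0) :
    let P : Submodule F (Polynomial F) :=
      Submodule.span F {p : Polynomial F | ∃ i < k, i ≠ h ∧ p = Polynomial.X ^ i} ⊔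
      Submodule.span F
        {(Polynomial.X : Polynomial F) ^ h + Polynomial.C η * Polynomial.X ^ (k - 1 + t)}
    let C : Submodule F (Fin n → F) := P.map (ev α v)
    (k ≤ t → Module.finrank F (schurProduct F C C) ≤ 3 * k - 1) ∧
    (t < k → Module.finrank F (schurProduct F C C) ≤ 2 * k + t) ∧
    ∀ I : Finset (Fin n), I.card ≤ k - 1 →
      Module.finrank F (shorten C (I : Set (Fin n))) = k - I.card →
      ((k - I.card ≤ t →
          Module.finrank F
            (schurProduct F (shorten C (I : Set (Fin n))) (shorten C (I : Set (Fin n)))) ≤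
          3 * (k - I.card) - 1) ∧
       (t < k - I.card →
          Module.finrank F
            (schurProduct F (shorten C (I : Set (Fin n))) (shorten C (I : Set (Fin n)))) ≤
          2 * (k - I.card) + t)) := by
  classical
  intro P C
  have hP : ∀ p ∈ P, p ∈ degreeLT F (k + t) ∧ (p.coeff (k - 1 + t) = 0 → p ∈ degreeLT F k) := by
    intro p hp
    obtain ⟨a, ha, b, hb, rfl⟩ := Submodule.mem_sup.1 hp
    obtain ⟨c, rfl⟩ := Submodule.mem_span_singleton.1 hb
    have ha' : a ∈ degreeLT F k := by
      refine (Submodule.span_le.2 ?_) ha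
      rintro _ ⟨i, hi, -, rfl⟩
      rw [SetLike.mem_coe, mem_degreeLT, degree_X_pow]
      exact_mod_cast hi
    have hX : ∀ i < k + t, (X : F[X]) ^ i ∈ degreeLT F (k + t) := by
      intro i hi
      rw [mem_degreeLT, degree_X_pow]
      exact_mod_cast hi
    constructor
    · refine add_mem (degreeLT_mono (by omega) ha') (Submodule.smul_mem _ _ (add_mem (hX _ (by omega)) ?_))
      rw [← smul_eq_C_mul]
      exact Submodule.smul_mem _ _ (hX _ (by omega))
    · intro h0
      have hc0 : a.coeff (k - 1 + t) = 0 := by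
        apply coeff_eq_zero_of_degree_lt
        refine lt_of_lt_of_le (mem_degreeLT.1 ha') ?_
        exact_mod_cast (by omega : k ≤ k - 1 + t)
      have hne : k - 1 + t ≠ h := by omega
      simp [hc0, coeff_X_pow, hne, hη] at h0
      simpa [h0] using ha'
  have hPf : Module.finrank F P ≤ k := by
    have : P ≤ Submodule.span F (((Finset.range k).image (fun i => if i = h then
        (X : F[X]) ^ h + Polynomial.C η * X ^ (k - 1 + t) else X ^ i) : Finset F[X]) : Set F[X]) := by
      refine sup_le (Submodule.span_mono ?_) (Submodule.span_mono ?_)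
      · rintro _ ⟨i, hi, hih, rfl⟩
        simp only [Finset.coe_image, Set.mem_image, Finset.mem_coe, Finset.mem_range]
        exact ⟨i, hi, by simp [hih]⟩
      · rintro _ rfl
        simp only [Finset.coe_image, Set.mem_image, Finset.mem_coe, Finset.mem_range]
        exact ⟨h, by omega, by simp⟩
    refine (Submodule.finrank_mono this).trans ((finrank_span_finset_le_card _).trans ?_)
    exact Finset.card_image_le.trans (by simp)
  have hfull := aux_main α v P k t hk1 (fun p hp => (hP p hp).1) (fun p hp => (hP p hp).2) hPf
  refine ⟨fun _ => hfull.1, fun _ => hfull.2, ?_⟩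
  intro I hI hdim
  obtain ⟨s, hs⟩ : ∃ s, s = I.card := ⟨_, rfl⟩
  rw [← hs] at hI hdim ⊢
  let G : F[X] := ∏ i ∈ I, (X - Polynomial.C (α i))
  have hGm : G.Monic := monic_prod_of_monic _ _ fun i _ => monic_X_sub_C _
  have hGd : G.natDegree = s := by
    rw [hs]; exact natDegree_finsetProd_X_sub_C_eq_card _ _
  have hGe : ∀ x, G.eval x = ∏ i ∈ I, (x - α i) := by
    intro x; simp [G, eval_prod]
  let Q : Submodule F F[X] := P.comap (LinearMap.mulLeft F G)
  have hQP : ∀ q, q ∈ Q ↔ G * q ∈ P := fun q => Iff.rfl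
  have hdeg : ∀ (q : F[X]) (d : ℕ), G * q ∈ degreeLT F (s + d) ↔ q ∈ degreeLT F d := by
    intro q d
    by_cases hq : q = 0
    · simp [hq]
    rw [mem_degreeLT, mem_degreeLT, ← natDegree_lt_iff_degree_lt hq,
      ← natDegree_lt_iff_degree_lt (mul_ne_zero hGm.ne_zero hq),
      natDegree_mul hGm.ne_zero hq, hGd]
    omega
  let α' : {i : Fin n // i ∉ (I : Set (Fin n))} → F := fun j => α j
  let v' : {i : Fin n // i ∉ (I : Set (Fin n))} → F := fun j => v j * G.eval (α j)
  have hQ1 : Q ≤ degreeLT F (k - s + t) := by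
    intro q hq
    rw [← hdeg, show s + (k - s + t) = k + t by omega]
    exact (hP _ hq).1
  have hQ2 : ∀ q ∈ Q, q.coeff (k - s - 1 + t) = 0 → q ∈ degreeLT F (k - s) := by
    intro q hq h0
    rw [← hdeg, show s + (k - s) = k by omega]
    apply (hP _ hq).2
    have hq' : q ∈ degreeLT F (k - s - 1 + t) := by
      rw [mem_degreeLT, degree_lt_iff_coeff_zero]
      intro j hj
      rcases hj.eq_or_lt with rfl | hj
      · exact h0
      · exact (degree_lt_iff_coeff_zero _ _).1 (mem_degreeLT.1 (hQ1 hq)) j (by omega)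
    rw [← hdeg, mem_degreeLT, degree_lt_iff_coeff_zero] at hq'
    exact hq' _ (by omega)
  have hS : shorten C (I : Set (Fin n)) = Q.map (ev α' v') := by
    ext x
    constructor
    · rintro ⟨c, ⟨⟨p, hp, rfl⟩, hc⟩, rfl⟩
      have hroot : ∀ i ∈ I, p.eval (α i) = 0 := by
        intro i hi
        have := congrFun (LinearMap.mem_ker.1 hc) ⟨i, hi⟩
        simpa [LinearMap.funLeft, ev, hv] using this
      have hdvd : G ∣ p := by
        apply Finset.prod_dvd_of_coprime
        · intro i _ j _ hij
          exact isCoprime_X_sub_C_of_isUnit_sub (sub_ne_zero.2 (hα.ne hij)).isUnit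
        · intro i hi
          exact dvd_iff_isRoot.2 (hroot i hi)
      obtain ⟨q, rfl⟩ := hdvd
      refine ⟨q, hp, ?_⟩
      ext j
      simp [ev, LinearMap.funLeft, α', v', mul_assoc]
    · rintro ⟨q, hq, rfl⟩
      refine ⟨ev α v (G * q), ⟨⟨_, hq, rfl⟩, ?_⟩, ?_⟩
      · rw [SetLike.mem_coe, LinearMap.mem_ker]
        ext ⟨i, hi⟩
        have : G.eval (α i) = 0 := by
          rw [hGe]; exact Finset.prod_eq_zero hi (sub_self _)
        simp [ev, LinearMap.funLeft, this]
      · ext j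
        simp [ev, LinearMap.funLeft, α', v', mul_assoc]
  have hinj : Function.Injective ((ev α' v').domRestrict Q) := by
    rw [← LinearMap.ker_eq_bot, LinearMap.ker_eq_bot']
    rintro ⟨q, hq⟩ h0
    have hz : ∀ i ∉ I, q.eval (α i) = 0 := by
      intro i hi
      have h1 := congrFun h0 ⟨i, hi⟩
      have h2 : G.eval (α i) ≠ 0 := by
        rw [hGe, Finset.prod_ne_zero_iff]
        intro j hj
        exact sub_ne_zero.2 (hα.ne fun e => hi (e ▸ hj))
      simpa [ev, α', v', hv, h2] using h1
    have : q = 0 := by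
      apply eq_zero_of_degree_lt_of_eval_finset_eq_zero (Iᶜ.image α)
      · rw [Finset.card_image_of_injective _ hα, Finset.card_compl, Fintype.card_fin, ← hs]
        refine lt_of_lt_of_le (mem_degreeLT.1 (hQ1 hq)) ?_
        exact_mod_cast (by omega : k - s + t ≤ n - s)
      · intro x hx
        obtain ⟨i, hi, rfl⟩ := Finset.mem_image.1 hx
        exact hz i (by simpa using hi)
    simpa using this
  have hQf : Module.finrank F Q ≤ k - s := by
    rw [← hdim, hS, ← LinearMap.finrank_range_of_inj hinj, LinearMap.range_domRestrict]
  rw [hS]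
  have := aux_main α' v' Q (k - s) t (by omega) hQ1 hQ2 hQf
  exact ⟨fun _ => this.1, fun _ => this.2⟩
end

section
/- Let F be a field, k ≥ 1 an integer, and let f, g ∈ F[x] be nonzero polynomials of degree < k. Then dim( f·F[x]_{<k} + g·F[x]_{<k} ) = k + max{deg f, deg g} − deg(gcd(f, g)), where f·F[x]_{<k} = { f h : h ∈ F[x], deg h < k }. -/
open Polynomial

lemma aux_fr_s14 {F : Type*} [Field F] (n : ℕ) (f : Polynomial F) (hf : f ≠ 0) :
    Module.finrank F ↥((Polynomial.degreeLT F n).map (LinearMap.mulLeft F f)) = n := by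
  have hinj : Function.Injective (LinearMap.mulLeft F f) := fun x y h =>
    mul_left_cancel₀ hf h
  rw [← (Submodule.equivMapOfInjective _ hinj (Polynomial.degreeLT F n)).finrank_eq,
    (Polynomial.degreeLTEquiv F n).finrank_eq]
  simp

lemma aux_deg_s14 {F : Type*} [Field F] (n : ℕ) (b t : Polynomial F) (hb : b ≠ 0) (ht : t ≠ 0) :
    b * t ∈ Polynomial.degreeLT F n ↔ b.natDegree + t.natDegree < n := by
  rw [Polynomial.mem_degreeLT, ← Polynomial.natDegree_lt_iff_degree_lt (mul_ne_zero hb ht),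
    Polynomial.natDegree_mul hb ht]

/-- For nonzero `f, g ∈ F[x]` of degree `< k`,
`dim(f·F[x]_{<k} + g·F[x]_{<k}) = k + max{deg f, deg g} − deg(gcd(f, g))`. -/
theorem stmt14 {F : Type*} [Field F] [DecidableEq F] {k : ℕ} (hk : 1 ≤ k)
    (f g : Polynomial F) (hf : f ≠ 0) (hg : g ≠ 0)
    (hfk : f.degree < (k : WithBot ℕ)) (hgk : g.degree < (k : WithBot ℕ)) :
    Module.finrank F
        ↥((Polynomial.degreeLT F k).map (LinearMap.mulLeft F f) ⊔
          (Polynomial.degreeLT F k).map (LinearMap.mulLeft F g)) =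
      k + max f.natDegree g.natDegree - (EuclideanDomain.gcd f g).natDegree := by
  have hfk' : f.natDegree < k := (Polynomial.natDegree_lt_iff_degree_lt hf).2 hfk
  have hgk' : g.natDegree < k := (Polynomial.natDegree_lt_iff_degree_lt hg).2 hgk
  have hbez := EuclideanDomain.gcd_eq_gcd_ab f g
  obtain ⟨a, ha⟩ := EuclideanDomain.gcd_dvd_left f g
  obtain ⟨b, hb⟩ := EuclideanDomain.gcd_dvd_right f g
  set u := EuclideanDomain.gcdA f g
  set v := EuclideanDomain.gcdB f g
  set d := EuclideanDomain.gcd f g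
  clear_value u v d
  have hd0 : d ≠ 0 := by rintro rfl; simp at ha; exact hf ha
  have ha0 : a ≠ 0 := by rintro rfl; simp at ha; exact hf ha
  have hb0 : b ≠ 0 := by rintro rfl; simp at hb; exact hg hb
  have hcop : IsCoprime b a := by
    refine ⟨v, u, mul_left_cancel₀ hd0 ?_⟩
    rw [ha, hb] at hbez
    linear_combination -hbez
  have hda : f.natDegree = d.natDegree + a.natDegree := by
    rw [ha, Polynomial.natDegree_mul hd0 ha0]
  have hdb : g.natDegree = d.natDegree + b.natDegree := by
    rw [hb, Polynomial.natDegree_mul hd0 hb0]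
  have hinf : (Polynomial.degreeLT F k).map (LinearMap.mulLeft F f) ⊓
      (Polynomial.degreeLT F k).map (LinearMap.mulLeft F g) =
      (Polynomial.degreeLT F (k - max a.natDegree b.natDegree)).map
        (LinearMap.mulLeft F (d * a * b)) := by
    ext p
    simp only [Submodule.mem_inf, Submodule.mem_map, LinearMap.mulLeft_apply]
    constructor
    · rintro ⟨⟨x, hx, rfl⟩, ⟨y, hy, hxy⟩⟩
      have h1 : b * y = a * x := by
        apply mul_left_cancel₀ hd0
        rw [ha, hb] at hxy
        linear_combination hxy
      obtain ⟨t, rfl⟩ : b ∣ x := hcop.dvd_of_dvd_mul_left ⟨y, h1.symm⟩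
      have h2 : y = a * t := by
        apply mul_left_cancel₀ hb0
        linear_combination h1
      subst h2
      refine ⟨t, ?_, by rw [ha]; ring⟩
      by_cases ht : t = 0
      · rw [ht]; exact zero_mem _
      rw [aux_deg_s14 _ _ _ hb0 ht] at hx
      rw [aux_deg_s14 _ _ _ ha0 ht] at hy
      rw [Polynomial.mem_degreeLT, ← Polynomial.natDegree_lt_iff_degree_lt ht]
      omega
    · rintro ⟨t, ht', rfl⟩
      by_cases ht : t = 0
      · subst ht
        exact ⟨⟨0, zero_mem _, by simp⟩, ⟨0, zero_mem _, by simp⟩⟩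
      rw [Polynomial.mem_degreeLT, ← Polynomial.natDegree_lt_iff_degree_lt ht] at ht'
      refine ⟨⟨b * t, ?_, by rw [ha]; ring⟩, ⟨a * t, ?_, by rw [hb]; ring⟩⟩
      · rw [aux_deg_s14 _ _ _ hb0 ht]; omega
      · rw [aux_deg_s14 _ _ _ ha0 ht]; omega
  haveI : FiniteDimensional F (Polynomial.degreeLT F k) :=
    Module.Finite.equiv (Polynomial.degreeLTEquiv F k).symm
  have key := Submodule.finrank_sup_add_finrank_inf_eq
    ((Polynomial.degreeLT F k).map (LinearMap.mulLeft F f))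
    ((Polynomial.degreeLT F k).map (LinearMap.mulLeft F g))
  rw [hinf, aux_fr_s14 _ _ hf, aux_fr_s14 _ _ hg, aux_fr_s14 _ _ (mul_ne_zero (mul_ne_zero hd0 ha0) hb0)] at key
  omega
end

section
/- Let F_q be a finite field with q elements and let s, u be nonnegative integers. The number of pairs (f, g) of polynomials over F_q with deg f = s and deg g = u equals (q−1)² q^{s+u}. If moreover s ≥ 1 and u ≥ 1, then: (1) the number of such pairs with gcd(f, g) of degree 0 (i.e., f and g coprime) equals (q−1)³ q^{s+u−1}; (2) for every integer i with 0 ≤ i < min{s, u}, the number of such pairs with deg(gcd(f, g)) = i equals (q−1)³ q^{s+u−i−1}. -/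
open Polynomial

set_option linter.unusedSectionVars false

namespace S15

variable {F : Type*} [Field F] [Fintype F] [DecidableEq F]

def D (F : Type*) [Field F] (s : ℕ) : Set (Polynomial F) := {p | p.degree = (s : WithBot ℕ)}

def M (F : Type*) [Field F] (s : ℕ) : Set (Polynomial F) := {p | p.Monic ∧ p.natDegree = s}

def N (F : Type*) [Field F] [DecidableEq F] (s u i : ℕ) : Set (Polynomial F × Polynomial F) :=
  {p | p.1.degree = (s : WithBot ℕ) ∧ p.2.degree = (u : WithBot ℕ) ∧
          (EuclideanDomain.gcd p.1 p.2).natDegree = i}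

lemma ncard_LT (n : ℕ) : ((degreeLT F n : Submodule F F[X]) : Set F[X]).ncard =
    Fintype.card F ^ n := by
  rw [← Nat.card_coe_set_eq]
  have := Nat.card_congr (degreeLTEquiv F n).toEquiv
  refine this.trans ?_
  simp

lemma finite_LT (n : ℕ) : ((degreeLT F n : Submodule F F[X]) : Set F[X]).Finite := by
  apply Set.finite_of_ncard_pos
  rw [ncard_LT]
  exact pow_pos Fintype.card_pos _

lemma D_eq (s : ℕ) : D F s = ((degreeLT F (s+1) : Submodule F F[X]) : Set F[X]) \
    ((degreeLT F s : Submodule F F[X]) : Set F[X]) := by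
  ext p
  simp only [D, Set.mem_setOf_eq, Set.mem_diff, SetLike.mem_coe, mem_degreeLT, not_lt]
  rcases eq_or_ne p 0 with rfl | hp
  · simp
  · rw [degree_eq_natDegree hp]
    norm_cast
    omega

lemma finite_D (s : ℕ) : (D F s).Finite := by
  rw [D_eq]; exact (finite_LT _).diff

lemma ncard_D (s : ℕ) : (D F s).ncard = (Fintype.card F - 1) * Fintype.card F ^ s := by
  rw [D_eq, Set.ncard_diff _ (finite_LT _), ncard_LT, ncard_LT, pow_succ, Nat.sub_mul, mul_comm, one_mul]
  exact degreeLT_mono (Nat.le_succ s)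

lemma M_eq (s : ℕ) : M F s = (fun p => X ^ s + p) '' ((degreeLT F s : Submodule F F[X]) : Set F[X]) := by
  ext p
  simp only [M, Set.mem_setOf_eq, Set.mem_image, SetLike.mem_coe, mem_degreeLT]
  constructor
  · rintro ⟨h, rfl⟩
    refine ⟨p - X ^ p.natDegree, ?_, by ring⟩
    have h1 : p.degree = (X ^ p.natDegree : F[X]).degree := by
      rw [degree_X_pow, degree_eq_natDegree h.ne_zero]
    have := degree_sub_lt h1 h.ne_zero (by simp [h.leadingCoeff])
    rwa [degree_eq_natDegree h.ne_zero] at this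
  · rintro ⟨r, hr, rfl⟩
    refine ⟨monic_X_pow_add hr, ?_⟩
    apply natDegree_eq_of_degree_eq_some
    rw [degree_add_eq_left_of_degree_lt, degree_X_pow]
    rwa [degree_X_pow]

lemma ncard_M (s : ℕ) : (M F s).ncard = Fintype.card F ^ s := by
  rw [M_eq, Set.ncard_image_of_injective _ (add_right_injective _), ncard_LT]

lemma ncard_DD (s u : ℕ) : (D F s ×ˢ D F u).ncard =
    (Fintype.card F - 1) ^ 2 * Fintype.card F ^ (s + u) := by
  rw [Set.ncard_prod, ncard_D, ncard_D]; ring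

lemma N_sub (s u i : ℕ) : N F s u i ⊆ D F s ×ˢ D F u := fun _ h => ⟨h.1, h.2.1⟩

lemma finite_N (s u i : ℕ) : (N F s u i).Finite :=
  ((finite_D s).prod (finite_D u)).subset (N_sub s u i)

lemma ne_of_deg {p : F[X]} {s : ℕ} (h : p.degree = (s : WithBot ℕ)) : p ≠ 0 := by
  rintro rfl; simp at h

lemma assoc_gcd (d a b : F[X]) (h : IsCoprime a b) :
    Associated (EuclideanDomain.gcd (d * a) (d * b)) d := by
  apply associated_of_dvd_dvd
  · obtain ⟨x, y, h⟩ := h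
    have : d = (d * a) * x + (d * b) * y := by linear_combination (-d) * h
    have h2 : EuclideanDomain.gcd (d * a) (d * b) ∣ (d * a) * x + (d * b) * y :=
      dvd_add (Dvd.dvd.mul_right (EuclideanDomain.gcd_dvd_left _ _) _)
        (Dvd.dvd.mul_right (EuclideanDomain.gcd_dvd_right _ _) _)
    rwa [← this] at h2
  · exact EuclideanDomain.dvd_gcd (Dvd.intro _ rfl) (Dvd.intro _ rfl)

lemma gcd_ne {a b : F[X]} (ha : a ≠ 0) : EuclideanDomain.gcd a b ≠ 0 := by
  intro h; exact ha (EuclideanDomain.gcd_eq_zero_iff.1 h).1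

lemma cop_iff {a b : F[X]} (ha : a ≠ 0) :
    (EuclideanDomain.gcd a b).natDegree = 0 ↔ IsCoprime a b := by
  rw [← EuclideanDomain.gcd_isUnit_iff, isUnit_iff_degree_eq_zero]
  exact (degree_eq_iff_natDegree_eq (n := 0) (gcd_ne ha)).symm

lemma N_eq (s u i : ℕ) : N F (s + i) (u + i) i =
    (fun t : F[X] × (F[X] × F[X]) => (t.1 * t.2.1, t.1 * t.2.2)) '' (M F i ×ˢ N F s u 0) := by
  ext ⟨f, g⟩
  simp only [Set.mem_image, Set.mem_prod, Prod.exists, Prod.mk.injEq]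
  constructor
  · rintro ⟨hf, hg, hd⟩
    simp only at hf hg hd
    have hf0 := ne_of_deg hf
    have he := gcd_ne (b := g) hf0
    set e := EuclideanDomain.gcd f g with hedef
    have hass : Associated (normalize e) e := normalize_associated e
    have hm : (normalize e).Monic := monic_normalize he
    have hdeg : (normalize e).natDegree = i := by
      rw [natDegree_eq_of_degree_eq (degree_eq_degree_of_associated hass), hd]
    obtain ⟨a, ha⟩ := hass.dvd.trans (EuclideanDomain.gcd_dvd_left f g)
    obtain ⟨b, hb⟩ := hass.dvd.trans (EuclideanDomain.gcd_dvd_right f g)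
    have hdd : (normalize e).degree = (i : WithBot ℕ) := by
      rw [degree_eq_natDegree hm.ne_zero, hdeg]
    have key : ∀ (p r : F[X]) (k : ℕ), r.degree = ((k + i : ℕ) : WithBot ℕ) →
        r = normalize e * p → p.degree = (k : WithBot ℕ) := by
      intro p r k hr hp
      have hp0 : p ≠ 0 := by
        rintro rfl
        exact ne_of_deg hr (by simpa using hp)
      rw [hp, degree_mul, hdd, degree_eq_natDegree hp0] at hr
      rw [degree_eq_natDegree hp0]
      norm_cast at hr ⊢
      omega
    have hA := key a f s hf ha
    refine ⟨normalize e, a, b, ⟨⟨hm, hdeg⟩, hA, key b g u hg hb, ?_⟩, ha.symm, hb.symm⟩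
    simp only
    rw [cop_iff (ne_of_deg hA)]
    have h1 : e = f * EuclideanDomain.gcdA f g + g * EuclideanDomain.gcdB f g :=
      EuclideanDomain.gcd_eq_gcd_ab f g
    obtain ⟨c, hc⟩ := hass.symm.dvd
    refine ⟨EuclideanDomain.gcdA f g * c, EuclideanDomain.gcdB f g * c, ?_⟩
    apply mul_left_cancel₀ hm.ne_zero
    calc _ = (normalize e * a * EuclideanDomain.gcdA f g + normalize e * b * EuclideanDomain.gcdB f g) * c := by ring
      _ = e * c := by rw [← ha, ← hb, ← h1]
      _ = _ := by rw [← hc, mul_one]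
  · rintro ⟨d, a, b, ⟨⟨hm, hdeg⟩, hA, hB, hc⟩, rfl, rfl⟩
    simp only at hA hB hc
    have hdd : d.degree = (i : WithBot ℕ) := by
      rw [degree_eq_natDegree hm.ne_zero, hdeg]
    refine ⟨?_, ?_, ?_⟩
    · simp only [degree_mul, hdd, hA]; norm_cast; omega
    · simp only [degree_mul, hdd, hB]; norm_cast; omega
    · simp only
      rw [cop_iff (ne_of_deg hA)] at hc
      rw [natDegree_eq_of_degree_eq (degree_eq_degree_of_associated (assoc_gcd d a b hc)), hdeg]

lemma ncard_N (s u i : ℕ) : (N F (s + i) (u + i) i).ncard =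
    Fintype.card F ^ i * (N F s u 0).ncard := by
  rw [N_eq, Set.ncard_image_of_injOn, Set.ncard_prod, ncard_M]
  rintro ⟨d, a, b⟩ ⟨⟨hm, -⟩, hA, hB, hc⟩ ⟨d', a', b'⟩ ⟨⟨hm', -⟩, hA', hB', hc'⟩ h
  simp only at hm hA hB hc hm' hA' hB' hc'
  simp only [Prod.mk.injEq] at h
  obtain ⟨h1, h2⟩ := h
  rw [cop_iff (ne_of_deg hA)] at hc
  rw [cop_iff (ne_of_deg hA')] at hc'
  have e1 := assoc_gcd d a b hc
  have e2 := assoc_gcd d' a' b' hc'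
  rw [h1, h2] at e1
  have : d = d' := eq_of_monic_of_associated hm hm' (e1.symm.trans e2)
  subst this
  rw [mul_left_cancel₀ hm.ne_zero h1, mul_left_cancel₀ hm.ne_zero h2]

lemma sum_N (s u : ℕ) : ∑ i ∈ Finset.range (min s u + 1), (N F s u i).ncard =
    (Fintype.card F - 1) ^ 2 * Fintype.card F ^ (s + u) := by
  classical
  rw [← ncard_DD]
  have hfin : (D F s ×ˢ D F u).Finite := (finite_D s).prod (finite_D u)
  rw [Set.ncard_eq_toFinset_card _ hfin]
  rw [Finset.card_eq_sum_card_fiberwise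
    (f := fun p : F[X] × F[X] => (EuclideanDomain.gcd p.1 p.2).natDegree)
    (t := Finset.range (min s u + 1))]
  · apply Finset.sum_congr rfl
    intro i _
    rw [← Set.ncard_coe_finset]
    congr 1
    ext p
    simp [N, D, and_assoc]
  · intro p hp
    have hp : p.1.degree = (s : WithBot ℕ) ∧ p.2.degree = (u : WithBot ℕ) := by
      simpa [D] using hp
    simp only [Finset.coe_range, Set.mem_Iio]
    have h1 := natDegree_le_of_dvd (EuclideanDomain.gcd_dvd_left p.1 p.2) (ne_of_deg hp.1)
    have h2 := natDegree_le_of_dvd (EuclideanDomain.gcd_dvd_right p.1 p.2) (ne_of_deg hp.2)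
    rw [natDegree_eq_of_degree_eq_some hp.1] at h1
    rw [natDegree_eq_of_degree_eq_some hp.2] at h2
    omega

lemma ncard_N0 (s u : ℕ) : (N F (s + 1) (u + 1) 0).ncard =
    (Fintype.card F - 1) ^ 3 * Fintype.card F ^ (s + u + 1) := by
  have h1 := sum_N (F := F) (s + 1) (u + 1)
  have h2 := sum_N (F := F) s u
  rw [show min (s+1) (u+1) + 1 = (min s u + 1) + 1 by omega, Finset.sum_range_succ'] at h1
  have h3 : ∑ i ∈ Finset.range (min s u + 1), (N F (s + 1) (u + 1) (i + 1)).ncard =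
      Fintype.card F * ∑ i ∈ Finset.range (min s u + 1), (N F s u i).ncard := by
    rw [Finset.mul_sum]
    apply Finset.sum_congr rfl
    intro i hi
    have hi := Finset.mem_range.1 hi
    obtain ⟨a, rfl⟩ : ∃ a, s = a + i := ⟨s - i, by omega⟩
    obtain ⟨b, rfl⟩ : ∃ b, u = b + i := ⟨u - i, by omega⟩
    rw [ncard_N, add_assoc, add_assoc, ncard_N]
    ring
  rw [h3, h2] at h1
  obtain ⟨c, hc⟩ : ∃ c, Fintype.card F = c + 1 := ⟨Fintype.card F - 1, by
    have := Fintype.card_pos (α := F); omega⟩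
  rw [hc] at h1 ⊢
  simp only [Nat.add_sub_cancel] at h1 ⊢
  zify at h1 ⊢
  linear_combination h1

lemma ncard_Ni (s u i : ℕ) (h : i < min s u) : (N F s u i).ncard =
    (Fintype.card F - 1) ^ 3 * Fintype.card F ^ (s + u - i - 1) := by
  obtain ⟨a, rfl⟩ : ∃ a, s = (a + 1) + i := ⟨s - i - 1, by omega⟩
  obtain ⟨b, rfl⟩ : ∃ b, u = (b + 1) + i := ⟨u - i - 1, by omega⟩
  rw [ncard_N, ncard_N0, show a + 1 + i + (b + 1 + i) - i - 1 = i + (a + b + 1) by omega]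
  ring

end S15

/-- Counting pairs of polynomials over `F_q` of exact degrees `s` and `u`:
there are `(q−1)² q^{s+u}` such pairs; if `s, u ≥ 1` then `(q−1)³ q^{s+u−1}` of them
are coprime (gcd of degree 0), and for `0 ≤ i < min{s,u}` exactly `(q−1)³ q^{s+u−i−1}`
of them have `deg(gcd) = i`. -/
theorem stmt15 {F : Type*} [Field F] [Fintype F] [DecidableEq F] (s u : ℕ) :
    Set.ncard {p : Polynomial F × Polynomial F |
        p.1.degree = (s : WithBot ℕ) ∧ p.2.degree = (u : WithBot ℕ)} =
      (Fintype.card F - 1) ^ 2 * Fintype.card F ^ (s + u) ∧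
    (1 ≤ s → 1 ≤ u →
      (Set.ncard {p : Polynomial F × Polynomial F |
          p.1.degree = (s : WithBot ℕ) ∧ p.2.degree = (u : WithBot ℕ) ∧
          (EuclideanDomain.gcd p.1 p.2).natDegree = 0} =
        (Fintype.card F - 1) ^ 3 * Fintype.card F ^ (s + u - 1)) ∧
      ∀ i < min s u,
        Set.ncard {p : Polynomial F × Polynomial F |
            p.1.degree = (s : WithBot ℕ) ∧ p.2.degree = (u : WithBot ℕ) ∧
            (EuclideanDomain.gcd p.1 p.2).natDegree = i} =
          (Fintype.card F - 1) ^ 3 * Fintype.card F ^ (s + u - i - 1)) := by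
  refine ⟨?_, fun hs hu => ⟨?_, fun i hi => ?_⟩⟩
  · exact S15.ncard_DD s u
  · exact S15.ncard_Ni s u 0 (by omega)
  · exact S15.ncard_Ni s u i hi
end

section
/- Let F_q be a finite field with q elements, let s, u ≥ 1 be integers, and let j be an integer with 0 ≤ j < min{s, u}. Then the number of pairs (f, g) of polynomials over F_q with deg f = s, deg g = u and deg(gcd(f, g)) ≤ j equals (q−1)² q^{s+u−j−1}(q^{j+1} − 1); equivalently, the proportion of such pairs among all (q−1)² q^{s+u} pairs with deg f = s and deg g = u is 1 − 1/q^{j+1}. -/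
open Polynomial

namespace Aux16

variable {F : Type*} [Field F]

lemma ncard_degLT [Fintype F] (n : ℕ) :
    {p : F[X] | p.degree < (n : WithBot ℕ)}.ncard = Fintype.card F ^ n := by
  have h : {p : F[X] | p.degree < (n : WithBot ℕ)} = (degreeLT F n : Set F[X]) := by
    ext p; simp [mem_degreeLT]
  rw [h, ← Nat.card_coe_set_eq]
  have := Nat.card_congr (degreeLTEquiv F n).toEquiv
  rw [Nat.card_fun] at this
  simpa using this

lemma finite_degLT [Fintype F] (n : ℕ) :
    {p : F[X] | p.degree < (n : WithBot ℕ)}.Finite := by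
  apply Set.finite_of_ncard_ne_zero
  rw [ncard_degLT]
  exact pow_ne_zero _ Fintype.card_ne_zero

lemma degEq_eq (n : ℕ) : {p : F[X] | p.degree = (n : WithBot ℕ)} =
    {p : F[X] | p.degree < ((n + 1 : ℕ) : WithBot ℕ)} \ {p : F[X] | p.degree < (n : WithBot ℕ)} := by
  ext p
  simp only [Set.mem_setOf_eq, Set.mem_diff, not_lt]
  constructor
  · intro h
    rw [h]
    exact ⟨by exact_mod_cast Nat.lt_succ_self n, le_rfl⟩
  · rintro ⟨h1, h2⟩
    have h0 : p ≠ 0 := by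
      rintro rfl
      simp at h2
    rw [degree_eq_natDegree h0] at *
    norm_cast at *
    omega

lemma ncard_degEq [Fintype F] (n : ℕ) :
    {p : F[X] | p.degree = (n : WithBot ℕ)}.ncard = (Fintype.card F - 1) * Fintype.card F ^ n := by
  rw [degEq_eq, Set.ncard_diff _ (finite_degLT n), ncard_degLT, ncard_degLT, pow_succ,
    Nat.sub_mul, one_mul, mul_comm]
  intro p hp
  have hp1 : p.degree < (n : WithBot ℕ) := hp
  have hn : (n : WithBot ℕ) < ((n + 1 : ℕ) : WithBot ℕ) := by exact_mod_cast Nat.lt_succ_self n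
  exact hp1.trans hn

/-- pairs with given degrees -/
def P (F : Type*) [Field F] (s u : ℕ) : Set (F[X] × F[X]) :=
  {p | p.1.degree = (s : WithBot ℕ) ∧ p.2.degree = (u : WithBot ℕ)}

/-- triples -/
def T (F : Type*) [Field F] (k s u : ℕ) : Set (F[X] × F[X] × F[X]) :=
  {t | t.1.Monic ∧ IsCoprime t.2.1 t.2.2 ∧ (t.1 * t.2.1).degree = (s : WithBot ℕ) ∧
    (t.1 * t.2.2).degree = (u : WithBot ℕ) ∧ k ≤ t.1.natDegree}

lemma P_eq (s u : ℕ) : P F s u = {p : F[X] | p.degree = (s : WithBot ℕ)} ×ˢ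
    {p : F[X] | p.degree = (u : WithBot ℕ)} := rfl

lemma ncard_P [Fintype F] (s u : ℕ) :
    (P F s u).ncard = (Fintype.card F - 1) ^ 2 * Fintype.card F ^ (s + u) := by
  rw [P_eq, Set.ncard_prod, ncard_degEq, ncard_degEq]
  ring

lemma finite_P [Fintype F] (s u : ℕ) : (P F s u).Finite := by
  rw [P_eq]
  apply Set.Finite.prod <;> rw [degEq_eq] <;> exact (finite_degLT _).diff

lemma dvd_of_cop {h h' a b a' b' : F[X]} (hc : IsCoprime a' b') (h1 : h * a = h' * a')
    (h2 : h * b = h' * b') : h ∣ h' := by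
  obtain ⟨x, y, hxy⟩ := hc
  refine ⟨x * a + y * b, ?_⟩
  linear_combination (-h') * hxy - x * h1 - y * h2

lemma T_inj (k s u : ℕ) :
    Set.InjOn (fun t : F[X] × F[X] × F[X] => (t.1 * t.2.1, t.1 * t.2.2)) (T F k s u) := by
  rintro ⟨h, a, b⟩ ⟨hm, hc, -⟩ ⟨h', a', b'⟩ ⟨hm', hc', -⟩ he
  simp only [Prod.mk.injEq] at *
  obtain ⟨e1, e2⟩ := he
  have : h = h' := eq_of_monic_of_associated hm hm'
    (associated_of_dvd_dvd (dvd_of_cop hc' e1 e2) (dvd_of_cop hc e1.symm e2.symm))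
  subst this
  exact ⟨rfl, mul_left_cancel₀ hm.ne_zero e1, mul_left_cancel₀ hm.ne_zero e2⟩

lemma natDegree_gcd_mul [DecidableEq F] {h a b : F[X]} (hm : h.Monic) (hc : IsCoprime a b)
    (ha : h * a ≠ 0) :
    (EuclideanDomain.gcd (h * a) (h * b)).natDegree = h.natDegree := by
  have h1 : h ∣ EuclideanDomain.gcd (h * a) (h * b) :=
    EuclideanDomain.dvd_gcd (dvd_mul_right _ _) (dvd_mul_right _ _)
  have h2 : EuclideanDomain.gcd (h * a) (h * b) ∣ h := by
    obtain ⟨x, y, hxy⟩ := hc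
    have : h = x * (h * a) + y * (h * b) := by linear_combination (-h) * hxy
    conv_rhs => rw [this]
    exact dvd_add (Dvd.dvd.mul_left (EuclideanDomain.gcd_dvd_left _ _) _)
      (Dvd.dvd.mul_left (EuclideanDomain.gcd_dvd_right _ _) _)
  apply le_antisymm (natDegree_le_of_dvd h2 hm.ne_zero)
  refine natDegree_le_of_dvd h1 ?_
  intro h0
  rw [EuclideanDomain.gcd_eq_zero_iff] at h0
  exact ha h0.1

lemma T_image [DecidableEq F] (k s u : ℕ) :
    (fun t : F[X] × F[X] × F[X] => (t.1 * t.2.1, t.1 * t.2.2)) '' (T F k s u) =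
      {p | p ∈ P F s u ∧ k ≤ (EuclideanDomain.gcd p.1 p.2).natDegree} := by
  ext ⟨f, g⟩
  constructor
  · rintro ⟨⟨h, a, b⟩, ⟨hm, hc, hs, hu, hk⟩, he⟩
    simp only [Prod.mk.injEq] at *
    obtain ⟨rfl, rfl⟩ := he
    refine ⟨⟨hs, hu⟩, ?_⟩
    simp only
    rwa [natDegree_gcd_mul hm hc]
    intro h0
    simp [h0] at hs
  · rintro ⟨⟨hs, hu⟩, hk⟩
    simp only at *
    have hf : f ≠ 0 := by
      rintro rfl
      simp at hs
    set d := EuclideanDomain.gcd f g with hd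
    have hd0 : d ≠ 0 := fun h0 => hf (EuclideanDomain.gcd_eq_zero_iff.1 h0).1
    have hl : d.leadingCoeff ≠ 0 := leadingCoeff_ne_zero.2 hd0
    obtain ⟨a, ha⟩ : d ∣ f := EuclideanDomain.gcd_dvd_left _ _
    obtain ⟨b, hb⟩ : d ∣ g := EuclideanDomain.gcd_dvd_right _ _
    have hC : C d.leadingCoeff⁻¹ * C d.leadingCoeff = (1 : F[X]) := by
      rw [← C_mul, inv_mul_cancel₀ hl, C_1]
    have e1 : d * C d.leadingCoeff⁻¹ * (C d.leadingCoeff * a) = f := by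
      linear_combination d * a * hC - ha
    have e2 : d * C d.leadingCoeff⁻¹ * (C d.leadingCoeff * b) = g := by
      linear_combination d * b * hC - hb
    refine ⟨(d * C d.leadingCoeff⁻¹, C d.leadingCoeff * a, C d.leadingCoeff * b),
      ⟨monic_mul_leadingCoeff_inv hd0, ?_, ?_, ?_, ?_⟩, ?_⟩
    · have hg := EuclideanDomain.gcd_eq_gcd_ab f g
      rw [← hd] at hg
      refine ⟨C d.leadingCoeff⁻¹ * EuclideanDomain.gcdA f g,
        C d.leadingCoeff⁻¹ * EuclideanDomain.gcdB f g, ?_⟩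
      apply mul_left_cancel₀ hd0
      generalize EuclideanDomain.gcdA f g = x at *
      generalize EuclideanDomain.gcdB f g = y at *
      simp only
      linear_combination (d * x * a + d * y * b) * hC - hg - x * ha - y * hb
    · simp only [e1, hs]
    · simp only [e2, hu]
    · simp only
      rwa [natDegree_mul_C (inv_ne_zero hl)]
    · simp only [e1, e2]

lemma ncard_T [DecidableEq F] (k s u : ℕ) : (T F k s u).ncard =
    {p | p ∈ P F s u ∧ k ≤ (EuclideanDomain.gcd p.1 p.2).natDegree}.ncard := by
  rw [← T_image, Set.ncard_image_of_injOn (T_inj k s u)]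

lemma monic_shift {k : ℕ} {r h : F[X]} (hr : r.degree < (k : WithBot ℕ)) (hm : h.Monic) :
    (X ^ k * h + r).Monic ∧ (X ^ k * h + r).natDegree = k + h.natDegree := by
  have hM : (X ^ k * h).Monic := (monic_X_pow k).mul hm
  have hD : (X ^ k * h).natDegree = k + h.natDegree := by
    rw [(monic_X_pow k).natDegree_mul hm, natDegree_X_pow]
  have hlt : r.degree < (X ^ k * h).degree := by
    rw [degree_eq_natDegree hM.ne_zero, hD]
    exact lt_of_lt_of_le hr (by exact_mod_cast Nat.le_add_right _ _)
  refine ⟨hM.add_of_left hlt, ?_⟩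
  rw [natDegree_add_eq_left_of_degree_lt hlt, hD]

lemma deg_mul_iff {h a : F[X]} (hm : h.Monic) (n : ℕ) :
    (h * a).degree = (n : WithBot ℕ) ↔ a ≠ 0 ∧ h.natDegree + a.natDegree = n := by
  by_cases ha : a = 0
  · simp [ha]
  · rw [degree_eq_natDegree (mul_ne_zero hm.ne_zero ha), natDegree_mul hm.ne_zero ha]
    simp only [ne_eq, ha, not_false_eq_true, true_and]
    norm_cast

lemma T_shift (k s u : ℕ) :
    ({p : F[X] | p.degree < (k : WithBot ℕ)} ×ˢ T F 0 s u).ncard = (T F k (s + k) (u + k)).ncard := by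
  have himg : (fun t : F[X] × F[X] × F[X] × F[X] => (X ^ k * t.2.1 + t.1, t.2.2)) ''
      ({p : F[X] | p.degree < (k : WithBot ℕ)} ×ˢ T F 0 s u) = T F k (s + k) (u + k) := by
    ext ⟨h, a, b⟩
    constructor
    · rintro ⟨⟨r, h1, a, b⟩, ⟨hr, hm, hc, hs, hu, -⟩, he⟩
      simp only [Prod.mk.injEq, Set.mem_setOf_eq] at *
      obtain ⟨rfl, rfl, rfl⟩ := he
      obtain ⟨m1, m2⟩ := monic_shift hr hm
      rw [deg_mul_iff hm] at hs hu
      refine ⟨m1, hc, (deg_mul_iff m1 _).2 ⟨hs.1, ?_⟩, (deg_mul_iff m1 _).2 ⟨hu.1, ?_⟩, ?_⟩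
      all_goals simp only
      all_goals omega
    · rintro ⟨hm, hc, hs, hu, hk⟩
      simp only at *
      have hX : (X ^ k : F[X]).Monic := monic_X_pow k
      have hr : (h %ₘ X ^ k).degree < (k : WithBot ℕ) := by
        simpa using degree_modByMonic_lt h hX
      have hdiv := modByMonic_add_div h (X ^ k : F[X])
      have hq : (h /ₘ X ^ k).Monic := by
        rw [Monic, leadingCoeff_divByMonic_of_monic hX, hm]
        rw [degree_X_pow, degree_eq_natDegree hm.ne_zero]
        exact_mod_cast hk
      obtain ⟨m1, m2⟩ := monic_shift hr hq
      have e : X ^ k * (h /ₘ X ^ k) + h %ₘ X ^ k = h := by rw [add_comm]; exact hdiv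
      rw [e] at m1 m2
      rw [deg_mul_iff hm] at hs hu
      refine ⟨(h %ₘ X ^ k, h /ₘ X ^ k, a, b), ⟨hr, hq, hc, (deg_mul_iff hq _).2 ⟨hs.1, ?_⟩,
        (deg_mul_iff hq _).2 ⟨hu.1, ?_⟩, Nat.zero_le _⟩, ?_⟩
      · simp only
        omega
      · simp only
        omega
      · simp only [e]
  rw [← himg, Set.ncard_image_of_injOn]
  rintro ⟨r, h, a, b⟩ ⟨hr, -⟩ ⟨r', h', a', b'⟩ ⟨hr', -⟩ he
  simp only [Prod.mk.injEq, Set.mem_setOf_eq] at *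
  obtain ⟨e1, rfl, rfl⟩ := he
  have hX : (X ^ k : F[X]).Monic := monic_X_pow k
  obtain ⟨u1, u2⟩ := div_modByMonic_unique (f := X ^ k * h + r) h r hX
    ⟨by ring, by simpa using hr⟩
  obtain ⟨v1, v2⟩ := div_modByMonic_unique (f := X ^ k * h + r) h' r' hX
    ⟨by rw [e1]; ring, by simpa using hr'⟩
  exact ⟨u2.symm.trans v2, u1.symm.trans v1, rfl, rfl⟩

lemma ncard_ge [Fintype F] [DecidableEq F] (k s u : ℕ) :
    {p | p ∈ P F (s + k) (u + k) ∧ k ≤ (EuclideanDomain.gcd p.1 p.2).natDegree}.ncard =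
      Fintype.card F ^ k * ((Fintype.card F - 1) ^ 2 * Fintype.card F ^ (s + u)) := by
  rw [← ncard_T, ← T_shift, Set.ncard_prod, ncard_degLT, ncard_T, ← ncard_P]
  simp

end Aux16

/-- For `s, u ≥ 1` and `0 ≤ j < min{s,u}`, the number of pairs `(f, g)` of polynomials
over `F_q` with `deg f = s`, `deg g = u` and `deg(gcd(f,g)) ≤ j` equals
`(q−1)² q^{s+u−j−1}(q^{j+1} − 1)`, i.e. a proportion `1 − 1/q^{j+1}` of all
`(q−1)² q^{s+u}` pairs with `deg f = s`, `deg g = u`. -/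
theorem stmt16 {F : Type*} [Field F] [Fintype F] [DecidableEq F]
    {s u j : ℕ} (hs : 1 ≤ s) (hu : 1 ≤ u) (hj : j < min s u) :
    Set.ncard {p : Polynomial F × Polynomial F |
        p.1.degree = (s : WithBot ℕ) ∧ p.2.degree = (u : WithBot ℕ) ∧
        (EuclideanDomain.gcd p.1 p.2).natDegree ≤ j} =
      (Fintype.card F - 1) ^ 2 * Fintype.card F ^ (s + u - j - 1) *
        (Fintype.card F ^ (j + 1) - 1) := by
  have hk : j + 1 ≤ s ∧ j + 1 ≤ u := by
    rw [lt_min_iff] at hj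
    omega
  obtain ⟨a, rfl⟩ := Nat.exists_eq_add_of_le' hk.1
  obtain ⟨b, rfl⟩ := Nat.exists_eq_add_of_le' hk.2
  have hset : {p : Polynomial F × Polynomial F |
        p.1.degree = ((a + (j + 1) : ℕ) : WithBot ℕ) ∧
        p.2.degree = ((b + (j + 1) : ℕ) : WithBot ℕ) ∧
        (EuclideanDomain.gcd p.1 p.2).natDegree ≤ j} =
      Aux16.P F (a + (j + 1)) (b + (j + 1)) \
        {p | p ∈ Aux16.P F (a + (j + 1)) (b + (j + 1)) ∧
          j + 1 ≤ (EuclideanDomain.gcd p.1 p.2).natDegree} := by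
    ext p
    simp only [Aux16.P, Set.mem_setOf_eq, Set.mem_diff]
    constructor
    · rintro ⟨h1, h2, h3⟩
      exact ⟨⟨h1, h2⟩, fun h => by omega⟩
    · rintro ⟨⟨h1, h2⟩, h3⟩
      refine ⟨h1, h2, ?_⟩
      by_contra h
      exact h3 ⟨⟨h1, h2⟩, by omega⟩
  rw [hset, Set.ncard_diff (fun p hp => hp.1) ((Aux16.finite_P _ _).subset fun p hp => hp.1),
    Aux16.ncard_ge, Aux16.ncard_P]
  have e : a + (j + 1) + (b + (j + 1)) - j - 1 = a + b + (j + 1) := by omega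
  rw [e, Nat.mul_sub]
  congr 1 <;> ring
end

section
/- Let F_q be a finite field with q ≥ 11 elements and let k, t be integers with k ≥ 17 and t ≥ 17. Let G be the set of pairs (f, g) of nonzero polynomials over F_q of degree < k satisfying the gcd condition: deg(gcd(f, g)) < max{deg f, deg g} − 5 if t > k, and deg(gcd(f, g)) < max{deg f, deg g} − (k − t) − 5 if t ≤ k. Then |G| ≥ (1 − 1/q^7) · q^{2k}; that is, the proportion of pairs in F_q[x]_{<k} × F_q[x]_{<k} (which has q^{2k} elements) satisfying the gcd condition is at least 1 − 1/q^7. -/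
open Polynomial

theorem aux_fin_s17 {F : Type*} [Field F] [Fintype F] (n : ℕ) :
    {p : F[X] | p.degree < (n : WithBot ℕ)}.Finite ∧
    {p : F[X] | p.degree < (n : WithBot ℕ)}.ncard = Fintype.card F ^ n := by
  have hs : {p : F[X] | p.degree < (n : WithBot ℕ)} = (degreeLT F n : Set F[X]) := by
    ext p; simp [mem_degreeLT]
  have e := (degreeLTEquiv F n).toEquiv
  haveI : Finite (degreeLT F n) := Finite.of_equiv _ e.symm
  rw [hs]
  refine ⟨Set.toFinite _, ?_⟩
  have h : Nat.card (degreeLT F n) = _ := Nat.card_congr e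
  rw [← Nat.card_coe_set_eq]
  refine h.trans ?_
  simp

noncomputable def auxP (F : Type*) [Field F] [Fintype F] (n : ℕ) : Finset F[X] :=
  (aux_fin_s17 (F := F) n).1.toFinset

theorem mem_auxP {F : Type*} [Field F] [Fintype F] (n : ℕ) (p : F[X]) :
    p ∈ auxP F n ↔ p.degree < (n : WithBot ℕ) := by simp [auxP]

theorem card_auxP {F : Type*} [Field F] [Fintype F] (n : ℕ) :
    (auxP F n).card = Fintype.card F ^ n := by
  rw [← (aux_fin_s17 (F := F) n).2, auxP, Set.ncard_eq_toFinset_card _ (aux_fin_s17 (F := F) n).1]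

theorem aux_cover {F : Type*} [Field F] [DecidableEq F] (k s : ℕ) (hk : 0 < k) (f g : F[X])
    (hf : f.degree < (k : WithBot ℕ)) (hg : g.degree < (k : WithBot ℕ))
    (h : f ≠ 0 → g ≠ 0 →
      max f.natDegree g.natDegree ≤ (EuclideanDomain.gcd f g).natDegree + s) :
    ∃ r, r < s + 1 ∧ ∃ d a b : F[X], d.degree < ((k - r : ℕ) : WithBot ℕ) ∧
      a.degree < ((r + 1 : ℕ) : WithBot ℕ) ∧ b.degree < ((r + 1 : ℕ) : WithBot ℕ) ∧
      f = d * a ∧ g = d * b := by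
  by_cases f0 : f = 0
  · refine ⟨0, by omega, g, 0, 1, by simpa using hg, by simp, by simp, by simp [f0], by simp⟩
  by_cases g0 : g = 0
  · refine ⟨0, by omega, f, 1, 0, by simpa using hf, by simp, by simp, by simp, by simp [g0]⟩
  have h := h f0 g0
  obtain ⟨a, ha⟩ := EuclideanDomain.gcd_dvd_left f g
  obtain ⟨b, hb⟩ := EuclideanDomain.gcd_dvd_right f g
  generalize EuclideanDomain.gcd f g = d at *
  have d0 : d ≠ 0 := by rintro rfl; simp at ha; exact f0 ha
  have a0 : a ≠ 0 := by rintro rfl; simp at ha; exact f0 ha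
  have b0 : b ≠ 0 := by rintro rfl; simp at hb; exact g0 hb
  have e1 : f.natDegree = d.natDegree + a.natDegree := by rw [ha, natDegree_mul d0 a0]
  have e2 : g.natDegree = d.natDegree + b.natDegree := by rw [hb, natDegree_mul d0 b0]
  rw [← natDegree_lt_iff_degree_lt f0] at hf
  rw [← natDegree_lt_iff_degree_lt g0] at hg
  refine ⟨max a.natDegree b.natDegree, by omega, d, a, b, ?_, ?_, ?_, ha, hb⟩
  · rw [← natDegree_lt_iff_degree_lt d0]; omega
  · rw [← natDegree_lt_iff_degree_lt a0]; omega
  · rw [← natDegree_lt_iff_degree_lt b0]; omega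

theorem aux_count {F : Type*} [Field F] [Fintype F] [DecidableEq F]
    (hq : 2 ≤ Fintype.card F) (k s : ℕ) (hs : s + 12 ≤ k) (G : Set (F[X] × F[X]))
    (hG : G ⊆ {p | p.1.degree < (k : WithBot ℕ) ∧ p.2.degree < (k : WithBot ℕ)})
    (h : ∀ f g : F[X], f.degree < (k : WithBot ℕ) → g.degree < (k : WithBot ℕ) →
      (f, g) ∉ G → f ≠ 0 → g ≠ 0 →
      max f.natDegree g.natDegree ≤ (EuclideanDomain.gcd f g).natDegree + s) :
    Fintype.card F ^ (2 * k) ≤ G.ncard + Fintype.card F ^ (2 * k - 7) := by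
  classical
  set q := Fintype.card F
  let B : ℕ → Finset (F[X] × F[X]) := fun r =>
    (auxP F (k - r) ×ˢ (auxP F (r + 1) ×ˢ auxP F (r + 1))).image
      (fun x => (x.1 * x.2.1, x.1 * x.2.2))
  have hGf : G.Finite := (Finset.finite_toSet (auxP F k ×ˢ auxP F k)).subset (by
    intro p hp
    have := hG hp
    simpa [mem_auxP] using this)
  have hsub : auxP F k ×ˢ auxP F k ⊆ hGf.toFinset ∪ (Finset.range (s + 1)).biUnion B := by
    rintro ⟨f, g⟩ hp
    rw [Finset.mem_product, mem_auxP, mem_auxP] at hp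
    rw [Finset.mem_union]
    by_cases hm : (f, g) ∈ G
    · left; simpa using hm
    · right
      obtain ⟨r, hr, d, a, b, hd, ha, hb, e1, e2⟩ :=
        aux_cover k s (by omega) f g hp.1 hp.2 (h f g hp.1 hp.2 hm)
      rw [Finset.mem_biUnion]
      refine ⟨r, by simpa using hr, Finset.mem_image.2 ⟨(d, a, b), ?_, by simp [e1, e2]⟩⟩
      simp only [Finset.mem_product, mem_auxP]
      exact ⟨hd, ha, hb⟩
  have h1 := (Finset.card_le_card hsub).trans (Finset.card_union_le _ _)
  rw [Finset.card_product, card_auxP, ← Set.ncard_eq_toFinset_card _ hGf, ← pow_add, ← two_mul] at h1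
  refine h1.trans (Nat.add_le_add_left ?_ _)
  calc _ ≤ ∑ r ∈ Finset.range (s + 1), (B r).card := Finset.card_biUnion_le
    _ ≤ ∑ r ∈ Finset.range (s + 1), q ^ (k + 2) * q ^ r := by
      refine Finset.sum_le_sum fun r hr => Finset.card_image_le.trans ?_
      rw [Finset.mem_range] at hr
      rw [Finset.card_product, Finset.card_product, card_auxP, card_auxP, ← pow_add, ← pow_add,
        ← pow_add]
      exact Nat.pow_le_pow_right (by omega) (by omega)
    _ = q ^ (k + 2) * ∑ r ∈ Finset.range (s + 1), q ^ r := by rw [Finset.mul_sum]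
    _ ≤ q ^ (k + 2) * q ^ (s + 1) :=
      Nat.mul_le_mul_left _ (Nat.geomSum_lt hq (by simp)).le
    _ ≤ q ^ (2 * k - 7) := by
      rw [← pow_add]; exact Nat.pow_le_pow_right (by omega) (by omega)



/-- For `q ≥ 11` and `k, t ≥ 17`, the set `G` of pairs of nonzero polynomials of
degree `< k` satisfying the gcd condition
(`deg gcd < max{deg f, deg g} − 5` if `t > k`, and
`deg gcd < max{deg f, deg g} − (k − t) − 5` if `t ≤ k`) satisfies
`|G| ≥ (1 − 1/q⁷) q^{2k}`. -/
theorem stmt17 {F : Type*} [Field F] [Fintype F] [DecidableEq F]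
    (hq : 11 ≤ Fintype.card F) {k t : ℕ} (hk : 17 ≤ k) (ht : 17 ≤ t) :
    (1 - 1 / (Fintype.card F : ℚ) ^ 7) * (Fintype.card F : ℚ) ^ (2 * k) ≤
      (Set.ncard {p : Polynomial F × Polynomial F |
        p.1 ≠ 0 ∧ p.2 ≠ 0 ∧ p.1.degree < (k : WithBot ℕ) ∧ p.2.degree < (k : WithBot ℕ) ∧
        (k < t →
          (EuclideanDomain.gcd p.1 p.2).natDegree < max p.1.natDegree p.2.natDegree - 5) ∧
        (t ≤ k →
          (EuclideanDomain.gcd p.1 p.2).natDegree <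
            max p.1.natDegree p.2.natDegree - (k - t) - 5)} : ℚ) := by
  have key := aux_count (F := F) (by omega) k (if k < t then 5 else k - t + 5)
    (by split_ifs <;> omega) {p : Polynomial F × Polynomial F |
        p.1 ≠ 0 ∧ p.2 ≠ 0 ∧ p.1.degree < (k : WithBot ℕ) ∧ p.2.degree < (k : WithBot ℕ) ∧
        (k < t →
          (EuclideanDomain.gcd p.1 p.2).natDegree < max p.1.natDegree p.2.natDegree - 5) ∧
        (t ≤ k →
          (EuclideanDomain.gcd p.1 p.2).natDegree <
            max p.1.natDegree p.2.natDegree - (k - t) - 5)}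
    (fun p hp => ⟨hp.2.2.1, hp.2.2.2.1⟩) (by
      intro f g hf hg hn f0 g0
      by_contra hc
      apply hn
      refine ⟨f0, g0, hf, hg, fun hkt => ?_, fun hkt => ?_⟩
      · rw [if_pos hkt] at hc
        dsimp only
        omega
      · rw [if_neg (by omega)] at hc
        dsimp only
        omega)
  have hq0 : (Fintype.card F : ℚ) ≠ 0 := by
    have : Fintype.card F ≠ 0 := by omega
    exact_mod_cast this
  have key' := (Nat.cast_le (α := ℚ)).2 key
  rw [Nat.cast_add, Nat.cast_pow, Nat.cast_pow] at key'
  have e : (Fintype.card F : ℚ) ^ (2 * k) =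
      (Fintype.card F : ℚ) ^ (2 * k - 7) * (Fintype.card F : ℚ) ^ 7 := by
    rw [← pow_add]; congr 1; omega
  have e2 : (1 - 1 / (Fintype.card F : ℚ) ^ 7) * (Fintype.card F : ℚ) ^ (2 * k) =
      (Fintype.card F : ℚ) ^ (2 * k) - (Fintype.card F : ℚ) ^ (2 * k - 7) := by
    rw [sub_mul, one_mul, e]; field_simp
  rw [e2]
  linarith
end
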